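/- For every irrational real number d, every compact set K contained in the open strip D := {s ∈ ℂ : 1/2 < Re(s) < 1} with connected complement in ℂ, and every ε > 0, one has liminf_{T→∞} (1/T)·μ{τ ∈ [0,T] : sup_{s∈K} |ζ(s+idτ) − ζ(s+iτ)| < ε} > 0. -/

import Mathlib

open MeasureTheory Filter Complex
open scoped ENNReal

/-- The open strip `D = {s : 1/2 < Re s < 1}`. -/
def strip : Set ℂ := {s : ℂ | 1/2 < s.re ∧ s.re < 1}

/-- Lower density of a set of real numbers:
`liminf_{T→∞} (1/T)·μ(S ∩ [0,T])`. -/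
noncomputable def lowerDens (S : Set ℝ) : ℝ :=
  liminf (fun T : ℝ => (volume (S ∩ Set.Icc 0 T)).toReal / T) atTop

/-- `sup_{s ∈ K} |f s|`, valued in `ℝ≥0∞`. -/
noncomputable def supNorm (K : Set ℂ) (f : ℂ → ℂ) : ℝ≥0∞ :=
  ⨆ s ∈ K, (‖f s‖₊ : ℝ≥0∞)


lemma expsum_zero (S : Finset ℝ) : ∀ (p : ℝ → ℝ) (Z : Finset ℝ),
    (∀ z ∈ Z, ∑ w ∈ S, p w * Real.exp (w * z) = 0) → S.card ≤ Z.card → ∀ w ∈ S, p w = 0 := by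
  classical
  induction S using Finset.induction_on with
  | empty => intro p Z _ _ w hw; simp at hw
  | insert a S' ha ih =>
    intro p Z hZ hc
    rw [Finset.card_insert_of_notMem ha] at hc
    have hS' : ∀ w ∈ S', p w * (w - a) = 0 := by
      by_contra hne
      have hlt : ∀ t : Finset ℝ, (∀ z ∈ t, ∑ w ∈ S', p w * (w - a) * Real.exp (w * z) = 0) →
          t.card < S'.card := by
        intro t ht
        by_contra hcon
        exact hne (ih (fun w => p w * (w - a)) t ht (not_lt.mp hcon))
      have hfin : Set.Finite {z : ℝ | ∑ w ∈ S', p w * (w - a) * Real.exp (w * z) = 0} := by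
        by_contra hinf
        obtain ⟨t, ht, htc⟩ := Set.Infinite.exists_subset_card_eq hinf S'.card
        exact absurd (hlt t (fun z hz => ht hz)) (by omega)
      have h1 : Z.card ≤ hfin.toFinset.card + 1 := by
        apply Finset.card_le_of_interleaved
        intro x hx y hy hxy _
        set g : ℝ → ℝ := fun z => p a + ∑ w ∈ S', p w * Real.exp ((w - a) * z) with hg
        have hg0 : ∀ z ∈ Z, g z = 0 := by
          intro z hz
          have h := hZ z hz
          rw [Finset.sum_insert ha] at h
          have : g z = Real.exp (-(a * z)) * (p a * Real.exp (a * z) +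
              ∑ w ∈ S', p w * Real.exp (w * z)) := by
            have q1 : Real.exp (-(a * z)) * (p a * Real.exp (a * z)) = p a := by
              rw [mul_left_comm, ← Real.exp_add]; simp
            rw [mul_add, Finset.mul_sum, hg, q1]
            refine congrArg (fun y => p a + y) ?_
            apply Finset.sum_congr rfl
            intro w _
            rw [mul_left_comm, ← Real.exp_add]; ring_nf
          rw [this, h, mul_zero]
        have hgd : ∀ z, HasDerivAt g (∑ w ∈ S', p w * (Real.exp ((w - a) * z) * ((w - a) * 1))) z := by
          intro z
          apply HasDerivAt.const_add
          apply HasDerivAt.fun_sum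
          intro w _
          exact (((hasDerivAt_id z).const_mul (w - a)).exp).const_mul (p w)
        obtain ⟨c, hc, hc0⟩ := exists_hasDerivAt_eq_zero (f := g) hxy
          (fun z _ => (hgd z).continuousAt.continuousWithinAt)
          (by rw [hg0 x hx, hg0 y hy]) (fun z _ => hgd z)
        refine ⟨c, ?_, hc.1, hc.2⟩
        simp only [Set.Finite.mem_toFinset, Set.mem_ofPred_eq]
        have : ∑ w ∈ S', p w * (w - a) * Real.exp (w * c) = Real.exp (a * c) *
            ∑ w ∈ S', p w * (Real.exp ((w - a) * c) * ((w - a) * 1)) := by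
          rw [Finset.mul_sum]
          apply Finset.sum_congr rfl
          intro w _
          have : Real.exp (w * c) = Real.exp (a * c) * Real.exp ((w - a) * c) := by
            rw [← Real.exp_add]; ring_nf
          rw [this]; ring
        rw [this, hc0, mul_zero]
      have h2 := hlt hfin.toFinset (by intro z hz; simpa using hz)
      omega
    have hS'' : ∀ w ∈ S', p w = 0 := by
      intro w hw
      rcases mul_eq_zero.mp (hS' w hw) with h | h
      · exact h
      · exfalso; apply ha; have : w = a := by linarith
        rwa [← this]
    intro w hw
    rcases Finset.mem_insert.mp hw with rfl | h
    · have : 0 < Z.card := by omega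
      obtain ⟨z, hz⟩ := Finset.card_pos.mp this
      have h := hZ z hz
      rw [Finset.sum_insert ha, Finset.sum_eq_zero (fun w hw => by rw [hS'' w hw, zero_mul]),
        add_zero] at h
      exact (mul_eq_zero.mp h).resolve_right (Real.exp_pos _).ne'
    · exact hS'' w h

lemma expdet_ne_zero {N : ℕ} (w z : Fin N → ℝ) (hw : Function.Injective w)
    (hz : Function.Injective z) :
    (Matrix.of (fun i j => Real.exp (w i * z j))).det ≠ 0 := by
  classical
  intro h
  obtain ⟨v, hv, hv0⟩ := Matrix.exists_vecMul_eq_zero_iff.mpr h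
  apply hv
  have key := expsum_zero (Finset.univ.image w) (Function.extend w v 0) (Finset.univ.image z) ?_ ?_
  · funext i
    have := key (w i) (by simp)
    rwa [hw.extend_apply] at this
  · intro y hy
    simp only [Finset.mem_image, Finset.mem_univ, true_and] at hy
    obtain ⟨j, rfl⟩ := hy
    rw [Finset.sum_image (by intro a _ b _ h; exact hw h)]
    have := congrFun hv0 j
    simp only [Matrix.vecMul, dotProduct, Matrix.of_apply, Pi.zero_apply] at this
    rw [← this]
    apply Finset.sum_congr rfl
    intro i _
    rw [hw.extend_apply]
  · rw [Finset.card_image_of_injective _ hw, Finset.card_image_of_injective _ hz]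

lemma sum_inj_ge {N : ℕ} (r : Fin N → ℕ) (hr : Function.Injective r) :
    N * (N - 1) / 2 ≤ ∑ i, r i := by
  rw [← Finset.sum_range_id]
  have : ∑ i, r i = ∑ x ∈ Finset.univ.image r, x := by
    rw [Finset.sum_image (by intro a _ b _ h; exact hr h)]
  rw [this]
  have hc : (Finset.univ.image r).card = N := by
    rw [Finset.card_image_of_injective _ hr]; simp
  generalize Finset.univ.image r = s at hc
  clear this hr r
  rw [← Fin.sum_univ_eq_sum_range (fun i => i)]
  rw [← Finset.sum_coe_sort s, ← (s.orderIsoOfFin hc).toEquiv.sum_comp]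
  apply Finset.sum_le_sum
  intro i _
  have hm : StrictMono (fun i : Fin N => ((s.orderIsoOfFin hc i : s) : ℕ)) := by
    intro a b hab
    exact_mod_cast (s.orderIsoOfFin hc).strictMono hab
  obtain ⟨i, hi⟩ := i
  simp only
  induction i with
  | zero => simp
  | succ k ih =>
    have h1 := ih (by omega) (Finset.mem_univ _)
    have h2 := hm (show (⟨k, by omega⟩ : Fin N) < ⟨k+1, hi⟩ from by simp)
    simp only at h2
    change k + 1 ≤ _
    have : k ≤ ((s.orderIsoOfFin hc ⟨k, by omega⟩ : s) : ℕ) := h1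
    have h3 : ((s.orderIsoOfFin hc ⟨k, by omega⟩ : s) : ℕ) < ((s.orderIsoOfFin hc ⟨k+1, hi⟩ : s) : ℕ) := h2
    exact lt_of_le_of_lt this h3

lemma det_abs_le {N : ℕ} (A : Matrix (Fin N) (Fin N) ℝ) (B : Fin N → ℝ)
    (h : ∀ i j, |A i j| ≤ B i) : |A.det| ≤ N.factorial * ∏ i, B i := by
  rw [← Matrix.det_transpose, Matrix.det_apply]
  refine (Finset.abs_sum_le_sum_abs _ _).trans ?_
  have : ∀ σ ∈ (Finset.univ : Finset (Equiv.Perm (Fin N))),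
      |Equiv.Perm.sign σ • ∏ i, A.transpose (σ i) i| ≤ ∏ i, B i := by
    intro σ _
    have : |Equiv.Perm.sign σ • ∏ i, A.transpose (σ i) i| = ∏ i, |A i (σ i)| := by
      rcases Int.units_eq_one_or (Equiv.Perm.sign σ) with h | h <;> rw [h] <;>
        simp [Finset.abs_prod, Matrix.transpose_apply]
    rw [this]
    exact Finset.prod_le_prod (fun i _ => abs_nonneg _) (fun i _ => h i _)
  refine (Finset.sum_le_sum this).trans ?_
  simp [Fintype.card_perm]

lemma det_trunc_bound {N : ℕ} (w z : Fin N → ℝ) (W Z R : ℝ) (hW : 0 ≤ W) (hZ : 0 ≤ Z) (hR : 1 ≤ R)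
    (hw : ∀ i, |w i| ≤ W) (hz : ∀ i, |z i| ≤ Z) (Q : ℕ) :
    |(Matrix.of (fun i j => ∑ k : Fin Q, (w i * z j) ^ (k : ℕ) / (k : ℕ).factorial)).det| * R ^ (N * (N - 1) / 2)
      ≤ N.factorial * Real.exp (N * (W * Z * R)) := by
  classical
  have hR0 : 0 < R := by linarith
  have e1 : (Matrix.of (fun i j => ∑ k : Fin Q, (w i * z j) ^ (k : ℕ) / (k : ℕ).factorial)) =
      Matrix.of (fun i => ∑ k : Fin Q, (fun j => (w i * z j) ^ (k : ℕ) / (k : ℕ).factorial)) := by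
    ext i j; simp
  have e2 : (Matrix.of (fun i j => ∑ k : Fin Q, (w i * z j) ^ (k : ℕ) / (k : ℕ).factorial)).det =
      ∑ r : Fin N → Fin Q, (Matrix.of (fun i j => (w i * z j) ^ (r i : ℕ) / (r i : ℕ).factorial)).det := by
    rw [e1]
    exact (Matrix.detRowAlternating (R := ℝ) (n := Fin N)).toMultilinearMap.map_sum
      (fun i (k : Fin Q) => (fun j => (w i * z j) ^ (k : ℕ) / (k : ℕ).factorial))
  rw [e2]
  have e3 : ∀ r : Fin N → Fin Q,
      |(Matrix.of (fun i j => (w i * z j) ^ (r i : ℕ) / (r i : ℕ).factorial)).det| * R ^ (N * (N - 1) / 2)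
      ≤ N.factorial * ∏ i, ((W * Z * R) ^ (r i : ℕ) / (r i : ℕ).factorial) := by
    intro r
    have hnn : 0 ≤ (N.factorial : ℝ) * ∏ i, ((W * Z * R) ^ (r i : ℕ) / (r i : ℕ).factorial) := by
      positivity
    by_cases hr : Function.Injective r
    · have h1 := det_abs_le (Matrix.of (fun i j => (w i * z j) ^ (r i : ℕ) / (r i : ℕ).factorial))
        (fun i => (W * Z) ^ (r i : ℕ) / (r i : ℕ).factorial) (by
          intro i j
          simp only [Matrix.of_apply, abs_div, abs_pow, abs_mul, Nat.abs_cast]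
          gcongr
          · exact hw i
          · exact hz j)
      have h2 : R ^ (N * (N - 1) / 2) ≤ R ^ (∑ i, (r i : ℕ)) :=
        pow_le_pow_right₀ hR (sum_inj_ge (fun i => (r i : ℕ)) (fun a b h => hr (Fin.ext h)))
      calc _ ≤ (N.factorial * ∏ i, ((W * Z) ^ (r i : ℕ) / (r i : ℕ).factorial)) * R ^ (∑ i, (r i : ℕ)) := by
            gcongr
        _ = _ := by
            rw [← Finset.prod_pow_eq_pow_sum, mul_assoc, ← Finset.prod_mul_distrib]
            congr 1
            apply Finset.prod_congr rfl
            intro i _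
            rw [mul_pow (W * Z) R]; ring
    · have : (Matrix.of (fun i j => (w i * z j) ^ (r i : ℕ) / ((r i : ℕ).factorial : ℝ))).det = 0 := by
        rw [Function.Injective] at hr
        push Not at hr
        obtain ⟨a, b, hab, hne⟩ := hr
        have e : (Matrix.of (fun i j => (w i * z j) ^ (r i : ℕ) / ((r i : ℕ).factorial : ℝ))) =
          Matrix.of (fun i j => (w i ^ (r i : ℕ) / ((r i : ℕ).factorial : ℝ)) *
            (Matrix.of (fun i j => z j ^ (r i : ℕ))) i j) := by
          ext i j; simp only [Matrix.of_apply]; rw [mul_pow]; ring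
        rw [e, Matrix.det_mul_column]
        rw [Matrix.det_zero_of_row_eq hne (by funext j; simp [hab]), mul_zero]
      rw [this, abs_zero, zero_mul]
      exact hnn
  calc _ ≤ (∑ r : Fin N → Fin Q, |(Matrix.of (fun i j => (w i * z j) ^ (r i : ℕ) / (r i : ℕ).factorial)).det|) * R ^ (N * (N - 1) / 2) := by
        gcongr; exact Finset.abs_sum_le_sum_abs _ _
    _ = ∑ r : Fin N → Fin Q, |(Matrix.of (fun i j => (w i * z j) ^ (r i : ℕ) / (r i : ℕ).factorial)).det| * R ^ (N * (N - 1) / 2) := by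
        rw [Finset.sum_mul]
    _ ≤ ∑ r : Fin N → Fin Q, N.factorial * ∏ i, ((W * Z * R) ^ (r i : ℕ) / (r i : ℕ).factorial) :=
        Finset.sum_le_sum (fun r _ => e3 r)
    _ = N.factorial * ∏ _i : Fin N, ∑ k : Fin Q, ((W * Z * R) ^ (k : ℕ) / (k : ℕ).factorial) := by
        rw [← Finset.mul_sum, Finset.prod_univ_sum, Fintype.piFinset_univ]
    _ ≤ N.factorial * ∏ _i : Fin N, Real.exp (W * Z * R) := by
        gcongr
        rw [Fin.sum_univ_eq_sum_range (fun k => (W * Z * R) ^ k / (k.factorial : ℝ))]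
        exact Real.sum_le_exp_of_nonneg (by positivity) _
    _ = _ := by rw [Finset.prod_const, Finset.card_univ, Fintype.card_fin, ← Real.exp_nat_mul]

lemma det_bound {N : ℕ} (w z : Fin N → ℝ) (W Z R : ℝ) (hW : 0 ≤ W) (hZ : 0 ≤ Z) (hR : 1 ≤ R)
    (hw : ∀ i, |w i| ≤ W) (hz : ∀ i, |z i| ≤ Z) :
    |(Matrix.of (fun i j => Real.exp (w i * z j))).det| * R ^ (N * (N - 1) / 2)
      ≤ N.factorial * Real.exp (N * (W * Z * R)) := by
  have hlim : Tendsto (fun Q : ℕ => (Matrix.of (fun i j => ∑ k : Fin Q, (w i * z j) ^ (k : ℕ) / ((k : ℕ).factorial : ℝ)))) atTop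
      (nhds (Matrix.of (fun i j => Real.exp (w i * z j)))) := by
    refine tendsto_pi_nhds.mpr (fun i => tendsto_pi_nhds.mpr (fun j => ?_))
    simp only [Matrix.of_apply]
    have := (NormedSpace.expSeries_div_hasSum_exp (w i * z j)).tendsto_sum_nat
    rw [← Real.exp_eq_exp_ℝ] at this
    refine this.congr ?_
    intro n
    rw [Fin.sum_univ_eq_sum_range (fun k => (w i * z j) ^ k / (k.factorial : ℝ))]
  have hc : Continuous (fun A : Matrix (Fin N) (Fin N) ℝ => |A.det| * R ^ (N * (N - 1) / 2)) :=
    ((continuous_id.matrix_det).abs).mul continuous_const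
  exact le_of_tendsto ((hc.tendsto _).comp hlim)
    (Eventually.of_forall (fun Q => det_trunc_bound w z W Z R hW hZ hR hw hz Q))


lemma rat_pow_den (b : ℚ) (m M : ℕ) (h : m ≤ M) : ∃ k : ℤ, (b.den : ℝ) ^ M * (b : ℝ) ^ m = k := by
  refine ⟨(b.den : ℤ) ^ (M - m) * b.num ^ m, ?_⟩
  have h1 : (b.den : ℝ) * (b : ℝ) = b.num := by
    exact_mod_cast (by rw [mul_comm]; exact Rat.mul_den_eq_num b : (b.den : ℚ) * b = b.num)
  push_cast
  rw [← h1, mul_pow, ← mul_assoc, ← pow_add]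
  congr 3
  omega

lemma transc_core (c : ℝ) (x : Fin 4 → ℝ) (b b' : Fin 4 → ℚ) (hc : Irrational c)
    (hx : ∀ k : Fin 4 → ℤ, ∑ i, (k i : ℝ) * x i = 0 → k = 0)
    (hb : ∀ i, Real.exp (x i) = b i) (hb' : ∀ i, Real.exp (c * x i) = b' i) : False := by
  classical
  set X : ℝ := ∑ i, |x i| with hX
  have hX0 : 0 ≤ X := Finset.sum_nonneg (fun i _ => abs_nonneg _)
  set A : ℝ := (1 + |c|) * X with hA
  have hA0 : 0 ≤ A := by positivity
  set D : ℕ := ∏ i, ((b i).den * (b' i).den) with hD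
  have hD0 : 0 < D := Finset.prod_pos (fun i _ => Nat.mul_pos (b i).den_pos (b' i).den_pos)
  have hlogD : 0 ≤ Real.log D := Real.log_natCast_nonneg D
  -- main inequality
  have main : ∀ K : ℕ, 1 ≤ K → ((K : ℝ) ^ 4 - 1) / 2 ≤ (K : ℝ) ^ 3 * (Real.log D + 3 * A + 4) := by
    intro K hK
    set N : ℕ := K ^ 4 with hN
    let e1 : Fin N ≃ Fin (K ^ 2) × Fin (K ^ 2) :=
      (Fintype.equivFinOfCardEq (by simp [hN]; ring)).symm
    let e2 : Fin N ≃ (Fin 4 → Fin K) := (Fintype.equivFinOfCardEq (by simp [hN])).symm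
    let w : Fin N → ℝ := fun i => ((e1 i).1 : ℕ) + ((e1 i).2 : ℕ) * c
    let z : Fin N → ℝ := fun j => ∑ i, ((e2 j i : ℕ) : ℝ) * x i
    have hw : Function.Injective w := by
      intro i j hij
      simp only [w] at hij
      by_cases h2 : ((e1 i).2 : ℕ) = ((e1 j).2 : ℕ)
      · rw [h2] at hij
        have h1 : ((e1 i).1 : ℕ) = ((e1 j).1 : ℕ) := by
          have := add_right_cancel hij
          exact_mod_cast this
        apply e1.injective
        exact Prod.ext (Fin.ext h1) (Fin.ext h2)
      · exfalso
        apply hc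
        have h3 : (((e1 i).2 : ℕ) : ℝ) - ((e1 j).2 : ℕ) ≠ 0 := by
          rw [sub_ne_zero]; exact_mod_cast h2
        refine ⟨((((e1 j).1 : ℕ) : ℚ) - ((e1 i).1 : ℕ)) / ((((e1 i).2 : ℕ) : ℚ) - ((e1 j).2 : ℕ)), ?_⟩
        push_cast
        rw [div_eq_iff h3]
        linarith
    have hz : Function.Injective z := by
      intro i j hij
      simp only [z] at hij
      have := hx (fun l => ((e2 i l : ℕ) : ℤ) - ((e2 j l : ℕ) : ℤ)) (by
        push_cast
        simp only [sub_mul, Finset.sum_sub_distrib]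
        linarith)
      apply e2.injective
      funext l
      have h := congrFun this l
      simp only [Pi.zero_apply] at h
      apply Fin.ext
      omega
    have hne := expdet_ne_zero w z hw hz
    have hwb : ∀ i, |w i| ≤ (K : ℝ) ^ 2 * (1 + |c|) := by
      intro i
      simp only [w]
      have h1 : (((e1 i).1 : ℕ) : ℝ) ≤ (K : ℝ) ^ 2 := by exact_mod_cast (e1 i).1.2.le
      have h2 : (((e1 i).2 : ℕ) : ℝ) ≤ (K : ℝ) ^ 2 := by exact_mod_cast (e1 i).2.2.le
      calc _ ≤ |(((e1 i).1 : ℕ) : ℝ)| + |(((e1 i).2 : ℕ) : ℝ) * c| := abs_add_le _ _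
        _ = (((e1 i).1 : ℕ) : ℝ) + (((e1 i).2 : ℕ) : ℝ) * |c| := by
          rw [abs_mul, Nat.abs_cast, Nat.abs_cast]
        _ ≤ (K : ℝ) ^ 2 + (K : ℝ) ^ 2 * |c| := by gcongr
        _ = _ := by ring
    have hzb : ∀ j, |z j| ≤ K * X := by
      intro j
      simp only [z]
      refine (Finset.abs_sum_le_sum_abs _ _).trans ?_
      rw [hX, Finset.mul_sum]
      apply Finset.sum_le_sum
      intro i _
      rw [abs_mul, Nat.abs_cast]
      gcongr
      exact (e2 j i).2.le
    have hub := det_bound w z ((K : ℝ) ^ 2 * (1 + |c|)) (K * X) (Real.exp 1) (by positivity)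
      (by positivity) (Real.one_le_exp (by norm_num)) hwb hzb
    set Δ := (Matrix.of (fun i j => Real.exp (w i * z j))).det with hΔ
    -- integrality
    have hint : ∀ i j, ∃ k : ℤ, (D : ℝ) ^ (K ^ 3) * Real.exp (w i * z j) = k := by
      intro i j
      have e : (D : ℝ) ^ (K ^ 3) * Real.exp (w i * z j) =
          ∏ l, ((((b l).den : ℝ) ^ (K ^ 3) * (b l : ℝ) ^ (((e1 i).1 : ℕ) * (e2 j l : ℕ))) *
            (((b' l).den : ℝ) ^ (K ^ 3) * (b' l : ℝ) ^ (((e1 i).2 : ℕ) * (e2 j l : ℕ)))) := by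
        have : Real.exp (w i * z j) = ∏ l, ((b l : ℝ) ^ (((e1 i).1 : ℕ) * (e2 j l : ℕ)) *
            (b' l : ℝ) ^ (((e1 i).2 : ℕ) * (e2 j l : ℕ))) := by
          simp only [z, Finset.mul_sum, Real.exp_sum]
          apply Finset.prod_congr rfl
          intro l _
          rw [← hb, ← hb', ← Real.exp_nat_mul, ← Real.exp_nat_mul, ← Real.exp_add]
          simp only [w]
          congr 1
          push_cast
          ring
        rw [this, hD, Nat.cast_prod, ← Finset.prod_pow, ← Finset.prod_mul_distrib]
        apply Finset.prod_congr rfl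
        intro l _
        push_cast
        ring
      have hle : ∀ (a : Fin (K ^ 2)) (l : Fin 4), (a : ℕ) * (e2 j l : ℕ) ≤ K ^ 3 := by
        intro a l
        calc (a : ℕ) * (e2 j l : ℕ) ≤ K ^ 2 * K := Nat.mul_le_mul a.2.le (e2 j l).2.le
          _ = K ^ 3 := by ring
      choose k1 hk1 using fun l => rat_pow_den (b l) _ _ (hle (e1 i).1 l)
      choose k2 hk2 using fun l => rat_pow_den (b' l) _ _ (hle (e1 i).2 l)
      refine ⟨∏ l, (k1 l * k2 l), ?_⟩
      rw [e]
      push_cast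
      apply Finset.prod_congr rfl
      intro l _
      rw [hk1, hk2]
    choose k hk using hint
    have hdet : ((D : ℝ) ^ (K ^ 3)) ^ N * Δ = ((Matrix.of k).det : ℤ) := by
      rw [Int.cast_det, hΔ]
      have := Matrix.det_smul (Matrix.of (fun i j => Real.exp (w i * z j))) ((D : ℝ) ^ (K ^ 3))
      rw [Fintype.card_fin] at this
      rw [← this]
      congr 1
      ext i j
      simp [hk]
    have hD0' : (0 : ℝ) < D := by exact_mod_cast hD0
    have hge : 1 ≤ ((D : ℝ) ^ (K ^ 3)) ^ N * |Δ| := by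
      have h0 : ((Matrix.of k).det : ℤ) ≠ 0 := by
        intro h
        rw [h, Int.cast_zero] at hdet
        rcases mul_eq_zero.mp hdet with h | h
        · exact absurd h (by positivity)
        · exact hne h
      have h1 : (1 : ℝ) ≤ |((Matrix.of k).det : ℝ)| := by
        exact_mod_cast Int.one_le_abs h0
      have h2 : |((D : ℝ) ^ (K ^ 3)) ^ N * Δ| = ((D : ℝ) ^ (K ^ 3)) ^ N * |Δ| := by
        rw [abs_mul, abs_of_pos (by positivity)]
      rw [← h2, hdet]
      exact h1
    have hΔpos : 0 < |Δ| := abs_pos.mpr hne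
    have hN1 : 1 ≤ N := Nat.one_le_pow _ _ hK
    have hfac : (N.factorial : ℝ) ≤ (N : ℝ) ^ N := by exact_mod_cast Nat.factorial_le_pow N
    have hNpos : (0 : ℝ) < N := by exact_mod_cast hN1
    have hKpos : (1 : ℝ) ≤ K := by exact_mod_cast hK
    -- take logs
    have hl1 : 0 ≤ N * ((K : ℝ) ^ 3 * Real.log D) + Real.log |Δ| := by
      have := Real.log_nonneg hge
      rw [Real.log_mul (by positivity) hΔpos.ne', Real.log_pow, Real.log_pow] at this
      push_cast at this
      linarith
    have hl2 : Real.log |Δ| + ((N * (N - 1) / 2 : ℕ) : ℝ) ≤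
        N * Real.log N + N * ((K : ℝ) ^ 2 * (1 + |c|) * (K * X) * Real.exp 1) := by
      have h := hub.trans (mul_le_mul_of_nonneg_right hfac (Real.exp_pos _).le)
      have := Real.log_le_log (by positivity) h
      rw [Real.log_mul hΔpos.ne' (by positivity), Real.log_pow, Real.log_exp,
        Real.log_mul (by positivity) (by positivity), Real.log_pow, Real.log_exp] at this
      linarith
    have hhalf : ((N * (N - 1) / 2 : ℕ) : ℝ) = N * ((N : ℝ) - 1) / 2 := by
      rw [Nat.cast_div (even_iff_two_dvd.mp (Nat.even_mul_pred_self N)) (by norm_num)]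
      push_cast [Nat.cast_sub hN1]
      ring
    rw [hhalf] at hl2
    have hlogN : Real.log N ≤ 4 * (K : ℝ) ^ 3 := by
      rw [hN]; push_cast
      rw [Real.log_pow]
      have h1 : Real.log K ≤ K := (Real.log_le_sub_one_of_pos (by linarith)).trans (by linarith)
      have h2 : (K : ℝ) ≤ (K : ℝ) ^ 3 := by
        calc (K : ℝ) = K ^ 1 := by ring
          _ ≤ K ^ 3 := pow_le_pow_right₀ hKpos (by norm_num)
      push_cast
      linarith
    have he : (K : ℝ) ^ 2 * (1 + |c|) * (K * X) * Real.exp 1 ≤ (K : ℝ) ^ 3 * (3 * A) := by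
      have : (K : ℝ) ^ 2 * (1 + |c|) * (K * X) * Real.exp 1 = (K : ℝ) ^ 3 * (Real.exp 1 * A) := by
        rw [hA]; ring
      rw [this]
      have := Real.exp_one_lt_d9
      gcongr
      linarith
    have hfin : (N : ℝ) * (((N : ℝ) - 1) / 2) ≤ N * ((K : ℝ) ^ 3 * (Real.log D + 3 * A + 4)) := by
      have h1 : (N : ℝ) * Real.log N ≤ N * (4 * (K : ℝ) ^ 3) := by gcongr
      have h2 := mul_le_mul_of_nonneg_left he hNpos.le
      nlinarith
    have := le_of_mul_le_mul_left hfin hNpos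
    rw [hN] at this
    push_cast at this
    exact this
  obtain ⟨K, hK⟩ := exists_nat_gt (2 * (Real.log D + 3 * A + 4) + 1)
  have hK1 : (1 : ℝ) < K := by linarith
  have h := main K (by exact_mod_cast hK1.le)
  have h3 : (1 : ℝ) ≤ (K : ℝ) ^ 3 := one_le_pow₀ hK1.le
  nlinarith


/-- `q` and `q^c` both rational -/
def BB (c : ℝ) (q : ℚ) : Prop := 0 < q ∧ ∃ a : ℚ, 0 < a ∧ c * Real.log q = Real.log a

lemma BB_div {c : ℝ} {q q' : ℚ} (h : BB c q) (h' : BB c q') : BB c (q / q') := by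
  obtain ⟨h0, a, ha, e⟩ := h
  obtain ⟨h0', a', ha', e'⟩ := h'
  refine ⟨div_pos h0 h0', a / a', div_pos ha ha', ?_⟩
  have p1 : (q : ℝ) ≠ 0 := by exact_mod_cast h0.ne'
  have p2 : (q' : ℝ) ≠ 0 := by exact_mod_cast h0'.ne'
  have p3 : (a : ℝ) ≠ 0 := by exact_mod_cast ha.ne'
  have p4 : (a' : ℝ) ≠ 0 := by exact_mod_cast ha'.ne'
  push_cast
  rw [Real.log_div p1 p2, Real.log_div p3 p4]
  linarith

lemma exists_val_ne {q : ℚ} (hq : 0 < q) (h1 : q ≠ 1) : ∃ p : ℕ, p.Prime ∧ padicValRat p q ≠ 0 := by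
  by_cases hden : q.den = 1
  · have hnum : q.num.natAbs ≠ 1 := by
      intro h
      have hp : 0 < q.num := Rat.num_pos.mpr hq
      apply h1
      rw [← Rat.num_div_den q, hden]
      have : q.num = 1 := by omega
      rw [this]; simp
    obtain ⟨p, hp, hd⟩ := Nat.exists_prime_and_dvd hnum
    refine ⟨p, hp, ?_⟩
    have := Fact.mk hp
    rw [padicValRat_def, hden]
    simp only [padicValNat_one_right, Nat.cast_zero, sub_zero, padicValInt]
    have := one_le_padicValNat_of_dvd (p := p) (by
      have := Rat.num_pos.mpr hq; omega) hd
    omega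
  · obtain ⟨p, hp, hd⟩ := Nat.exists_prime_and_dvd hden
    refine ⟨p, hp, ?_⟩
    have := Fact.mk hp
    rw [padicValRat_def]
    have hn : ¬ p ∣ q.num.natAbs := by
      intro h
      have := Nat.dvd_gcd h hd
      rw [q.reduced] at this
      exact hp.one_lt.ne' (Nat.dvd_one.mp this)
    have h0 : padicValInt p q.num = 0 := padicValNat.eq_zero_of_not_dvd hn
    have := one_le_padicValNat_of_dvd (p := p) q.den_nz hd
    rw [h0]
    omega

lemma exists_primes {c : ℝ} (hc : Irrational c) : ∃ P : Finset ℕ, (∀ p ∈ P, p.Prime) ∧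
    ∀ q : ℚ, BB c q → (∀ p ∈ P, padicValRat p q = 0) → q = 1 := by
  by_contra hcon
  push Not at hcon
  have H : ∀ P : Finset ℕ, (∀ p ∈ P, p.Prime) → ∃ (q : ℚ) (p : ℕ), BB c q ∧
      (∀ p ∈ P, padicValRat p q = 0) ∧ p.Prime ∧ padicValRat p q ≠ 0 := by
    intro P hP
    obtain ⟨q, h1, h2, h3⟩ := hcon P hP
    obtain ⟨p, hp, hv⟩ := exists_val_ne h1.1 h3
    exact ⟨q, p, h1, h2, hp, hv⟩
  obtain ⟨q0, p0, hB0, hv0, hp0, hn0⟩ := H ∅ (by simp)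
  obtain ⟨q1, p1, hB1, hv1, hp1, hn1⟩ := H {p0} (by simp [hp0])
  obtain ⟨q2, p2, hB2, hv2, hp2, hn2⟩ := H {p0, p1} (by simp [hp0, hp1])
  obtain ⟨q3, p3, hB3, hv3, hp3, hn3⟩ := H {p0, p1, p2} (by simp [hp0, hp1, hp2])
  simp only [Finset.mem_insert, Finset.mem_singleton, forall_eq_or_imp, forall_eq] at hv1 hv2 hv3
  obtain ⟨g0, a0, ha0, e0⟩ := hB0
  obtain ⟨g1, a1, ha1, e1⟩ := hB1
  obtain ⟨g2, a2, ha2, e2⟩ := hB2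
  obtain ⟨g3, a3, ha3, e3⟩ := hB3
  apply transc_core c ![Real.log q0, Real.log q1, Real.log q2, Real.log q3] ![q0, q1, q2, q3]
    ![a0, a1, a2, a3] hc
  · intro k hk
    simp only [Fin.sum_univ_four, Matrix.cons_val] at hk
    have r0 : (0 : ℝ) < q0 := by exact_mod_cast g0
    have r1 : (0 : ℝ) < q1 := by exact_mod_cast g1
    have r2 : (0 : ℝ) < q2 := by exact_mod_cast g2
    have r3 : (0 : ℝ) < q3 := by exact_mod_cast g3
    have hprod : q0 ^ k 0 * q1 ^ k 1 * q2 ^ k 2 * q3 ^ k 3 = 1 := by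
      have : (q0 : ℝ) ^ k 0 * (q1 : ℝ) ^ k 1 * (q2 : ℝ) ^ k 2 * (q3 : ℝ) ^ k 3 = 1 := by
        apply Real.log_injOn_pos (Set.mem_Ioi.mpr (by positivity)) (Set.mem_Ioi.mpr one_pos)
        rw [Real.log_mul (by positivity) (by positivity), Real.log_mul (by positivity) (by positivity),
          Real.log_mul (by positivity) (by positivity), Real.log_zpow, Real.log_zpow,
          Real.log_zpow, Real.log_zpow, Real.log_one]
        exact hk
      exact_mod_cast this
    have hval : ∀ p : ℕ, p.Prime → k 0 * padicValRat p q0 + k 1 * padicValRat p q1 +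
        k 2 * padicValRat p q2 + k 3 * padicValRat p q3 = 0 := by
      intro p hp
      have := Fact.mk hp
      have h := congrArg (padicValRat p) hprod
      rw [padicValRat.mul (by positivity) (by positivity), padicValRat.mul (by positivity) (by positivity),
        padicValRat.mul (by positivity) (by positivity), padicValRat.zpow, padicValRat.zpow,
        padicValRat.zpow, padicValRat.zpow, padicValRat.one] at h
      exact h
    have k0 : k 0 = 0 := by
      have := hval p0 hp0
      rw [hv1, hv2.1, hv3.1] at this
      simpa [hn0] using this
    have k1 : k 1 = 0 := by
      have := hval p1 hp1
      rw [k0, hv2.2, hv3.2.1] at this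
      simpa [hn1] using this
    have k2 : k 2 = 0 := by
      have := hval p2 hp2
      rw [k0, k1, hv3.2.2] at this
      simpa [hn2] using this
    have k3 : k 3 = 0 := by
      have := hval p3 hp3
      rw [k0, k1, k2] at this
      simpa [hn3] using this
    funext i
    fin_cases i <;> simp [k0, k1, k2, k3]
  · intro i
    fin_cases i <;> simp <;> apply Real.exp_log <;> exact_mod_cast (by assumption)
  · intro i
    fin_cases i <;> simp [e0, e1, e2, e3] <;> apply Real.exp_log <;> exact_mod_cast (by assumption)

lemma summable_pi {ι : Type*} [Fintype ι] (f : ℤ → ℝ) (h0 : ∀ x, 0 ≤ f x) (hf : Summable f) :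
    Summable (fun v : ι → ℤ => ∏ i, f (v i)) := by
  classical
  apply summable_of_sum_le (c := ∏ _i : ι, ∑' x, f x) (fun v => Finset.prod_nonneg (fun i _ => h0 _))
  intro u
  calc ∑ v ∈ u, ∏ i, f (v i) ≤ ∑ v ∈ Fintype.piFinset (fun i => u.image (fun v => v i)), ∏ i, f (v i) := by
        apply Finset.sum_le_sum_of_subset_of_nonneg
        · intro v hv
          rw [Fintype.mem_piFinset]
          intro i
          exact Finset.mem_image_of_mem _ hv
        · intro v _ _
          exact Finset.prod_nonneg (fun i _ => h0 _)
    _ = ∏ i, ∑ x ∈ u.image (fun v => v i), f x := by rw [Finset.prod_univ_sum]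
    _ ≤ _ := by
        apply Finset.prod_le_prod
        · intro i _; exact Finset.sum_nonneg (fun _ _ => h0 _)
        · intro i _; exact hf.sum_le_tsum _ (fun _ _ => h0 _)

lemma summable_two {σ : ℝ} (hσ : 0 < σ) : Summable (fun x : ℤ => ((2 : ℝ) ^ (-σ)) ^ x.natAbs) := by
  have h1 : (2 : ℝ) ^ (-σ) < 1 := Real.rpow_lt_one_of_one_lt_of_neg (by norm_num) (by linarith)
  have h2 := summable_geometric_of_lt_one (by positivity) h1
  apply Summable.of_nat_of_neg
  · simpa using h2
  · simpa using h2

lemma prod_pow_le {P : Finset ℕ} (hP : ∀ p ∈ P, p.Prime) {m n : ℕ} (hm : 0 < m) (hn : 0 < n) :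
    (Nat.gcd m n) ^ 2 * ∏ p ∈ P, 2 ^ (padicValRat p ((m : ℚ) / n)).natAbs ≤ m * n := by
  obtain ⟨g, m0, n0, hg, hcop, rfl, rfl⟩ := Nat.exists_coprime' (m := m) (n := n) (Nat.gcd_pos_of_pos_left _ hm)
  have hm0 : m0 ≠ 0 := by rintro rfl; simp at hm
  have hn0 : n0 ≠ 0 := by rintro rfl; simp at hn
  have hgq : (g : ℚ) ≠ 0 := by exact_mod_cast hg.ne'
  rw [Nat.gcd_mul_right, hcop.gcd_eq_one, one_mul]
  have hfr : ((m0 * g : ℕ) : ℚ) / ((n0 * g : ℕ) : ℚ) = (m0 : ℚ) / n0 := by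
    push_cast
    rw [mul_div_mul_right _ _ hgq]
  rw [hfr]
  have key : ∏ p ∈ P, 2 ^ (padicValRat p ((m0 : ℚ) / n0)).natAbs ≤ m0 * n0 := by
    calc _ ≤ ∏ p ∈ P, p ^ (padicValNat p (m0 * n0)) := by
          apply Finset.prod_le_prod (fun _ _ => by positivity)
          intro p hp
          have := Fact.mk (hP p hp)
          rw [padicValRat.div (by exact_mod_cast hm0) (by exact_mod_cast hn0), padicValRat.of_nat,
            padicValRat.of_nat, padicValNat.mul hm0 hn0]
          calc 2 ^ ((padicValNat p m0 : ℤ) - padicValNat p n0).natAbs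
              ≤ 2 ^ (padicValNat p m0 + padicValNat p n0) :=
                Nat.pow_le_pow_right (by norm_num) (by omega)
            _ ≤ _ := Nat.pow_le_pow_left (hP p hp).two_le _
      _ ≤ m0 * n0 := by
          apply Nat.le_of_dvd (by positivity)
          apply Finset.prod_dvd_of_isRelPrime
          · intro p hp q hq hpq
            exact Nat.coprime_iff_isRelPrime.mp (Nat.Coprime.pow _ _ ((Nat.coprime_primes (hP p hp) (hP q hq)).mpr hpq))
          · intro p hp
            exact pow_padicValNat_dvd
  calc _ ≤ g ^ 2 * (m0 * n0) := Nat.mul_le_mul_left _ key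
    _ = _ := by ring

open Classical in
lemma summ_BB {c : ℝ} (hc : Irrational c) {σ : ℝ} (hσ : 1 / 2 < σ) :
    Summable (fun mn : ℕ × ℕ => if 0 < mn.1 ∧ 0 < mn.2 ∧ BB c ((mn.1 : ℚ) / mn.2) then
      ((mn.1 : ℝ) * mn.2) ^ (-σ) else 0) := by
  obtain ⟨P, hP, hinj⟩ := exists_primes hc
  let S : Set (ℕ × ℕ) := {mn | 0 < mn.1 ∧ 0 < mn.2 ∧ BB c ((mn.1 : ℚ) / mn.2)}
  let φ : S → ℕ × (P → ℤ) := fun mn => (Nat.gcd mn.1.1 mn.1.2, fun p => padicValRat p ((mn.1.1 : ℚ) / mn.1.2))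
  have hφ : Function.Injective φ := by
    rintro ⟨⟨m, n⟩, hm, hn, hB⟩ ⟨⟨m', n'⟩, hm', hn', hB'⟩ h
    simp only [φ, Prod.mk.injEq] at h hm hn hB hm' hn' hB'
    obtain ⟨hg, hv⟩ := h
    have h1 := hinj _ (BB_div hB hB') (by
      intro p hp
      have := Fact.mk (hP p hp)
      have hvp := congrFun hv ⟨p, hp⟩
      simp only at hvp
      rw [padicValRat.div hB.1.ne' hB'.1.ne', hvp, sub_self])
    rw [div_eq_one_iff_eq hB'.1.ne', div_eq_div_iff (by positivity) (by positivity)] at h1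
    have h2 : m * n' = m' * n := by exact_mod_cast h1
    have hgp : 0 < Nat.gcd m n := Nat.gcd_pos_of_pos_left _ hm
    have h3 : m * Nat.gcd m n = m' * Nat.gcd m n := by
      calc m * Nat.gcd m n = m * Nat.gcd m' n' := by rw [hg]
        _ = Nat.gcd (m * m') (m * n') := (Nat.gcd_mul_left _ _ _).symm
        _ = Nat.gcd (m' * m) (m' * n) := by rw [h2, mul_comm m m']
        _ = m' * Nat.gcd m n := Nat.gcd_mul_left _ _ _
    have h4 : m = m' := Nat.eq_of_mul_eq_mul_right hgp h3
    have h5 : n' = n := by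
      rw [← h4] at h2
      exact Nat.eq_of_mul_eq_mul_left hm h2
    simp [h4, h5]
  have hsg : Summable (fun kv : ℕ × (P → ℤ) => ((kv.1 : ℝ) ^ (-(2 * σ))) *
      ∏ p, ((2 : ℝ) ^ (-σ)) ^ (kv.2 p).natAbs) := by
    apply Summable.mul_of_nonneg (f := fun k : ℕ => (k : ℝ) ^ (-(2 * σ)))
      (g := fun v : P → ℤ => ∏ p, ((2 : ℝ) ^ (-σ)) ^ (v p).natAbs)
    · exact Real.summable_nat_rpow.mpr (by linarith)
    · exact summable_pi (ι := P) (fun x => ((2 : ℝ) ^ (-σ)) ^ x.natAbs) (fun x => by positivity)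
        (summable_two (by linarith))
    · intro k; positivity
    · intro v; simp only [Pi.zero_apply]; positivity
  have hs := hsg.comp_injective hφ
  have hs2 : Summable (fun mn : S => ((mn.1.1 : ℝ) * mn.1.2) ^ (-σ)) := by
    apply Summable.of_nonneg_of_le _ _ hs
    · intro mn; positivity
    · rintro ⟨⟨m, n⟩, hm, hn, hB⟩
      simp only [Function.comp, φ] at hm hn ⊢
      have h := prod_pow_le hP hm hn
      have hg : 0 < Nat.gcd m n := Nat.gcd_pos_of_pos_left _ hm
      have h' : ((Nat.gcd m n : ℕ) : ℝ) ^ 2 * ∏ p ∈ P, (2 : ℝ) ^ (padicValRat p ((m : ℚ) / n)).natAbs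
          ≤ (m : ℝ) * n := by exact_mod_cast h
      have hg' : (0 : ℝ) < (Nat.gcd m n : ℕ) := by exact_mod_cast hg
      refine (Real.rpow_le_rpow_of_nonpos (by positivity) h' (by linarith)).trans (le_of_eq ?_)
      rw [Real.mul_rpow (by positivity) (by positivity), ← Real.rpow_natCast, ← Real.rpow_mul hg'.le]
      congr 1
      · congr 1; push_cast; ring
      · rw [← Finset.prod_coe_sort, ← Real.finsetProd_rpow _ _ (fun i _ => by positivity)]
        apply Finset.prod_congr rfl
        intro p _
        rw [← Real.rpow_natCast, ← Real.rpow_natCast, ← Real.rpow_mul (by norm_num),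
          ← Real.rpow_mul (by norm_num), mul_comm]
  have hs3 := (summable_subtype_iff_indicator (s := S) (f := fun mn : ℕ × ℕ => ((mn.1 : ℝ) * mn.2) ^ (-σ))).mp hs2
  refine hs3.congr ?_
  intro mn
  simp only [Set.indicator, S]
  rfl

open Classical in
lemma tail_BB {c : ℝ} (hc : Irrational c) {σ : ℝ} (hσ : 1 / 2 < σ) {ρ : ℝ} (hρ : 0 < ρ) :
    ∃ N0 : ℕ, ∀ N, N0 ≤ N → ∀ Y : ℕ, ∑ m ∈ Finset.Ioc N Y, ∑ n ∈ Finset.Ioc N Y,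
      (if BB c ((m : ℚ) / n) then ((m : ℝ) * n) ^ (-σ) else 0) ≤ ρ := by
  obtain ⟨s, hs⟩ := summable_iff_vanishing_norm.mp (summ_BB hc hσ) ρ hρ
  refine ⟨s.sup Prod.fst, fun N hN Y => ?_⟩
  have h := hs (Finset.Ioc N Y ×ˢ Finset.Ioc N Y) (by
    rw [Finset.disjoint_left]
    intro x hx hxs
    have h1 : x.1 ≤ s.sup Prod.fst := Finset.le_sup (f := Prod.fst) hxs
    have h2 := (Finset.mem_Ioc.mp (Finset.mem_product.mp hx).1).1
    omega)
  rw [Finset.sum_product] at h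
  refine le_trans (le_of_eq ?_) ((le_abs_self _).trans h.le)
  apply Finset.sum_congr rfl
  intro m hm
  apply Finset.sum_congr rfl
  intro n hn
  have h1 : 0 < m := by have := (Finset.mem_Ioc.mp hm).1; omega
  have h2 : 0 < n := by have := (Finset.mem_Ioc.mp hn).1; omega
  simp [h1, h2]


/-- iterated differences of `x^{-s}` -/
noncomputable def Dk : ℕ → ℂ → ℝ → ℂ
  | 0, s, x => (x : ℂ) ^ (-s)
  | (k + 1), s, x => Dk k s x - Dk k s (x + 1)

lemma Dk_hasDeriv (k : ℕ) : ∀ (s : ℂ) (x : ℝ), 0 < x →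
    HasDerivAt (fun y => Dk k s y) (-s * Dk k (s + 1) x) x := by
  induction k with
  | zero =>
    intro s x hx
    have h := HasDerivAt.cpow_const (c := -s) (hasDerivAt_id (x : ℂ)) (by
      simp [Complex.mem_slitPlane_iff, hx])
    have h2 := h.comp_ofReal
    simp only [Dk]
    have e : -s * (x : ℂ) ^ (-(s + 1)) = -s * id (x : ℂ) ^ (-s - 1) * 1 := by
      rw [mul_one, id]
      congr 2
      ring
    rw [e]
    exact h2
  | succ k ih =>
    intro s x hx
    simp only [Dk]
    have h1 := ih s x hx
    have h2 := (ih s (x + 1) (by linarith)).comp_add_const x 1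
    have e : -s * (Dk k (s + 1) x - Dk k (s + 1) (x + 1)) =
      -s * Dk k (s + 1) x - -s * Dk k (s + 1) (x + 1) := by ring
    rw [e]
    exact h1.sub h2

lemma Dk_bound (k : ℕ) : ∀ (s : ℂ) (x : ℝ), 0 < x → 0 ≤ s.re →
    ‖Dk k s x‖ ≤ (‖s‖ + k) ^ k * x ^ (-s.re - k) := by
  induction k with
  | zero =>
    intro s x hx _
    simp only [Dk]
    rw [Complex.norm_cpow_eq_rpow_re_of_pos hx]
    simp
  | succ k ih =>
    intro s x hx hs
    have hb : ∀ y ∈ Set.Icc x (x + 1), ‖-s * Dk k (s + 1) y‖ ≤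
        ‖s‖ * ((‖s‖ + 1 + k) ^ k * x ^ (-s.re - ((k + 1 : ℕ) : ℝ))) := by
      intro y hy
      have hy0 : 0 < y := lt_of_lt_of_le hx hy.1
      rw [norm_mul, norm_neg]
      have h1 := ih (s + 1) y hy0 (by simp; linarith)
      refine mul_le_mul_of_nonneg_left (h1.trans ?_) (norm_nonneg _)
      have h2 : ‖s + 1‖ ≤ ‖s‖ + 1 := (norm_add_le _ _).trans (by simp)
      have h3 : y ^ (-(s + 1).re - (k : ℝ)) ≤ x ^ (-s.re - ((k + 1 : ℕ) : ℝ)) := by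
        have : -(s + 1).re - (k : ℝ) = -s.re - ((k + 1 : ℕ) : ℝ) := by
          simp; ring
        rw [this]
        have hk : (0 : ℝ) ≤ ((k + 1 : ℕ) : ℝ) := by positivity
        exact Real.rpow_le_rpow_of_nonpos hx hy.1 (by linarith)
      gcongr
    have hmv := (convex_Icc x (x + 1)).norm_image_sub_le_of_norm_hasDerivWithin_le
      (f := fun y => Dk k s y) (f' := fun y => -s * Dk k (s + 1) y)
      (fun y hy => (Dk_hasDeriv k s y (lt_of_lt_of_le hx hy.1)).hasDerivWithinAt) hb
      (show x + 1 ∈ Set.Icc x (x + 1) by simp) (show x ∈ Set.Icc x (x + 1) by simp)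
    simp only [Dk]
    refine hmv.trans ?_
    have : ‖x - (x + 1)‖ = 1 := by simp
    rw [this, mul_one, pow_succ, ← mul_assoc]
    have hx' : 0 ≤ x ^ (-s.re - ((k + 1 : ℕ) : ℝ)) := by positivity
    refine mul_le_mul_of_nonneg_right ?_ hx'
    have e : ‖s‖ + 1 + (k : ℝ) = ‖s‖ + ((k + 1 : ℕ) : ℝ) := by push_cast; ring
    rw [e, mul_comm]
    gcongr
    have : (0 : ℝ) ≤ ((k + 1 : ℕ) : ℝ) := by positivity
    linarith

/-- alternating sums of iterated differences -/
noncomputable def Sk (k : ℕ) (s : ℂ) (X : ℕ) : ℂ := ∑' n : ℕ, (-1 : ℂ) ^ n * Dk k s (X + n : ℕ)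

lemma Sk_summable_norm {k : ℕ} {s : ℂ} {X : ℕ} (hX : 1 ≤ X) (hs : 0 ≤ s.re) (hk : 1 < s.re + k) :
    Summable (fun n : ℕ => (-1 : ℂ) ^ n * Dk k s (X + n : ℕ)) := by
  apply Summable.of_norm_bounded (g := fun n : ℕ => (‖s‖ + k) ^ k * ((X + n : ℕ) : ℝ) ^ (-s.re - k))
  · apply Summable.mul_left
    have h := (Real.summable_nat_rpow (p := -s.re - k)).mpr (by linarith)
    have := (summable_nat_add_iff X).mpr h
    refine this.congr (fun n => ?_)
    rw [add_comm n X]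
  · intro n
    rw [norm_mul, norm_pow, norm_neg, norm_one, one_pow, one_mul]
    exact Dk_bound k s _ (by positivity) hs

lemma Sk_succ {k : ℕ} {s : ℂ} {X : ℕ} (hX : 1 ≤ X) (hs : 0 ≤ s.re) (hk : 1 < s.re + k) :
    Sk (k + 1) s X = 2 * Sk k s X - Dk k s X := by
  have h1 := Sk_summable_norm hX hs hk
  have h2 := (summable_nat_add_iff 1).mpr h1
  have e : Sk k s X = Dk k s X + ∑' n : ℕ, (-1 : ℂ) ^ (n + 1) * Dk k s (X + (n + 1) : ℕ) := by
    rw [Sk, h1.tsum_eq_zero_add]; simp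
  have e2 : Sk (k + 1) s X = Sk k s X + ∑' n : ℕ, (-1 : ℂ) ^ (n + 1) * Dk k s (X + (n + 1) : ℕ) := by
    rw [Sk, Sk, ← h1.tsum_add h2]
    congr 1
    funext n
    simp only [Dk]
    push_cast
    rw [pow_succ, add_assoc]
    ring
  rw [e2]
  linear_combination (-1 : ℂ) * e

lemma Sk_shift {k : ℕ} {s : ℂ} {X : ℕ} (hX : 1 ≤ X) (hs : 0 ≤ s.re) (hk : 1 < s.re + k) :
    Sk k s X = Dk k s X - Sk k s (X + 1) := by
  have h1 := Sk_summable_norm hX hs hk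
  rw [Sk, h1.tsum_eq_zero_add, Sk, sub_eq_add_neg, ← tsum_neg]
  congr 1
  · simp
  · congr 1
    funext n
    rw [pow_succ]
    have : X + (n + 1) = X + 1 + n := by ring
    rw [this]
    ring

lemma eta_partial {s : ℂ} (hs : 0 < s.re) (X : ℕ) :
    (Dk 0 s (1 : ℕ) + Sk 1 s 1) / 2 = ∑ n ∈ Finset.Icc 1 X, (-1 : ℂ) ^ (n - 1) * (n : ℂ) ^ (-s) +
      (-1 : ℂ) ^ X * ((Dk 0 s (X + 1 : ℕ) + Sk 1 s (X + 1)) / 2) := by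
  induction X with
  | zero => simp
  | succ X ih =>
    rw [ih, Finset.sum_Icc_succ_top (by omega), Sk_shift (by omega) hs.le (by push_cast; linarith)]
    simp only [Dk]
    push_cast
    rw [pow_succ]
    ring

lemma resid_eq {s : ℂ} (hs : 0 < s.re) {X : ℕ} (hX : 1 ≤ X) (k : ℕ) :
    (Dk 0 s X + Sk 1 s X) / 2 = ∑ j ∈ Finset.range (k + 1), (1 / 2 : ℂ) ^ (j + 1) * Dk j s X +
      (1 / 2 : ℂ) ^ (k + 1) * Sk (k + 1) s X := by
  induction k with
  | zero => simp; ring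
  | succ k ih =>
    rw [ih, Finset.sum_range_succ _ (k + 1), Sk_succ (k := k + 1) hX hs.le (by
      push_cast; have : (0 : ℝ) ≤ k := by positivity
      linarith)]
    rw [pow_succ _ (k + 1)]
    ring

/-- the constant `∑ (n+1)^{-2}` -/
noncomputable def C2 : ℝ := ∑' n : ℕ, ((n + 1 : ℕ) : ℝ) ^ (-2 : ℝ)

lemma C2_summable : Summable (fun n : ℕ => ((n + 1 : ℕ) : ℝ) ^ (-2 : ℝ)) :=
  (summable_nat_add_iff 1).mpr (Real.summable_nat_rpow.mpr (by norm_num))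

lemma C2_nonneg : 0 ≤ C2 := tsum_nonneg (fun n => by positivity)

lemma Sk_bound {k : ℕ} {s : ℂ} {X : ℕ} (hX : 1 ≤ X) (hs : 0 ≤ s.re) (hk : 2 ≤ k) :
    ‖Sk k s X‖ ≤ C2 * ((‖s‖ + k) ^ k * (X : ℝ) ^ ((2 : ℝ) - k)) := by
  have hk' : (2 : ℝ) ≤ k := by exact_mod_cast hk
  have hX' : (1 : ℝ) ≤ X := by exact_mod_cast hX
  have hb : ∀ n : ℕ, ‖(-1 : ℂ) ^ n * Dk k s (X + n : ℕ)‖ ≤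
      ((n + 1 : ℕ) : ℝ) ^ (-2 : ℝ) * ((‖s‖ + k) ^ k * (X : ℝ) ^ ((2 : ℝ) - k)) := by
    intro n
    rw [norm_mul, norm_pow, norm_neg, norm_one, one_pow, one_mul]
    refine (Dk_bound k s _ (by positivity) hs).trans ?_
    rw [mul_left_comm]
    refine mul_le_mul_of_nonneg_left ?_ (by positivity)
    have hp : (0 : ℝ) < ((X + n : ℕ) : ℝ) := by positivity
    have h1 : (1 : ℝ) ≤ ((X + n : ℕ) : ℝ) := by exact_mod_cast (by omega : 1 ≤ X + n)
    calc ((X + n : ℕ) : ℝ) ^ (-s.re - k) ≤ ((X + n : ℕ) : ℝ) ^ ((-2 : ℝ) + (2 - k)) :=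
          Real.rpow_le_rpow_of_exponent_le h1 (by linarith)
      _ = ((X + n : ℕ) : ℝ) ^ (-2 : ℝ) * ((X + n : ℕ) : ℝ) ^ ((2 : ℝ) - k) := Real.rpow_add hp _ _
      _ ≤ _ := by
        gcongr ?_ * ?_
        · exact Real.rpow_le_rpow_of_nonpos (by positivity) (by exact_mod_cast (by omega : n + 1 ≤ X + n)) (by norm_num)
        · exact Real.rpow_le_rpow_of_nonpos (by positivity) (by exact_mod_cast (by omega : X ≤ X + n)) (by linarith)
  have := tsum_of_norm_bounded ((C2_summable.mul_right ((‖s‖ + k) ^ k * (X : ℝ) ^ ((2 : ℝ) - k))).hasSum) hb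
  rw [tsum_mul_right] at this
  exact this

lemma resid_bound {s : ℂ} (hs : 1 / 2 < s.re) {X : ℕ} (hX : 1 ≤ X) (k : ℕ) (hk : 1 ≤ k)
    (hU : ‖s‖ + (k + 1) ≤ X) :
    ‖(Dk 0 s X + Sk 1 s X) / 2‖ ≤ (k + 1) * (X : ℝ) ^ (-(1 / 2) : ℝ) +
      C2 * (((‖s‖ + (k + 1)) / X) ^ (k + 1) * (X : ℝ) ^ 2) := by
  have hX' : (1 : ℝ) ≤ X := by exact_mod_cast hX
  have hX0 : (0 : ℝ) < X := by linarith
  rw [resid_eq (by linarith) hX k]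
  have hhalf : ∀ j : ℕ, ‖(1 / 2 : ℂ) ^ j‖ ≤ 1 := by
    intro j
    rw [norm_pow]
    exact pow_le_one₀ (norm_nonneg _) (by norm_num)
  refine (norm_add_le _ _).trans (add_le_add ?_ ?_)
  · refine (norm_sum_le _ _).trans ?_
    have : ∀ j ∈ Finset.range (k + 1), ‖(1 / 2 : ℂ) ^ (j + 1) * Dk j s X‖ ≤ (X : ℝ) ^ (-(1 / 2) : ℝ) := by
      intro j hj
      have hjk : (j : ℝ) ≤ k + 1 := by exact_mod_cast (Finset.mem_range.mp hj).le
      rw [norm_mul]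
      calc _ ≤ 1 * ((‖s‖ + j) ^ j * (X : ℝ) ^ (-s.re - j)) := by
            gcongr
            · exact hhalf _
            · exact Dk_bound j s X hX0 (by linarith)
        _ = ((‖s‖ + j) / X) ^ j * (X : ℝ) ^ (-s.re) := by
            rw [one_mul, Real.rpow_sub hX0, Real.rpow_natCast, div_pow]; ring
        _ ≤ 1 * (X : ℝ) ^ (-s.re) := by
            gcongr
            apply pow_le_one₀ (by positivity)
            rw [div_le_one hX0]; linarith
        _ ≤ _ := by
            rw [one_mul]
            exact Real.rpow_le_rpow_of_exponent_le hX' (by linarith)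
    refine (Finset.sum_le_sum this).trans (le_of_eq ?_)
    simp
  · rw [norm_mul]
    calc _ ≤ 1 * (C2 * ((‖s‖ + ((k + 1 : ℕ) : ℝ)) ^ (k + 1) * (X : ℝ) ^ ((2 : ℝ) - ((k + 1 : ℕ) : ℝ)))) := by
          gcongr
          · exact hhalf _
          · exact Sk_bound hX (by linarith) (by omega)
      _ = _ := by
          rw [one_mul, Real.rpow_sub hX0, Real.rpow_natCast, div_pow]
          rw [show (2 : ℝ) = ((2 : ℕ) : ℝ) by norm_num, Real.rpow_natCast]
          push_cast
          ring


lemma Dk_one_diff (n : ℕ) : Differentiable ℂ (fun s => Dk 1 s ((1 + n : ℕ) : ℝ)) := by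
  simp only [Dk]
  have h1 : (((1 + n : ℕ) : ℝ) : ℂ) ≠ 0 := by
    exact_mod_cast (by omega : 1 + n ≠ 0)
  have h2 : ((((1 + n : ℕ) : ℝ) + 1 : ℝ) : ℂ) ≠ 0 := by
    have : (0 : ℝ) < ((1 + n : ℕ) : ℝ) + 1 := by positivity
    exact_mod_cast this.ne'
  intro s
  exact ((differentiableAt_id.neg).const_cpow (Or.inl h1)).sub
    ((differentiableAt_id.neg).const_cpow (Or.inl h2))

lemma Sk_one_diff {s : ℂ} (hs : 0 < s.re) : DifferentiableAt ℂ (fun s => Sk 1 s 1) s := by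
  let U : Set ℂ := {w | s.re / 2 < w.re} ∩ Metric.ball s 1
  have hU : IsOpen U := (isOpen_lt continuous_const Complex.continuous_re).inter Metric.isOpen_ball
  have hsU : s ∈ U := ⟨show s.re / 2 < s.re by linarith, Metric.mem_ball_self one_pos⟩
  have hsum : Summable (fun n : ℕ => (‖s‖ + 2) * ((1 + n : ℕ) : ℝ) ^ (-(s.re / 2) - 1)) := by
    apply Summable.mul_left
    have h := (Real.summable_nat_rpow (p := -(s.re / 2) - 1)).mpr (by linarith)
    have := (summable_nat_add_iff 1).mpr h
    refine this.congr (fun n => ?_)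
    rw [add_comm n 1]
  have := differentiableOn_tsum_of_summable_norm (F := fun (n : ℕ) s => (-1 : ℂ) ^ n * Dk 1 s (1 + n : ℕ))
    hsum (U := U) (fun n => ((Dk_one_diff n).differentiableOn).const_mul _) hU (by
      intro n w hw
      rw [norm_mul, norm_pow, norm_neg, norm_one, one_pow, one_mul]
      have hwre : s.re / 2 < w.re := hw.1
      have hb := Dk_bound 1 w ((1 + n : ℕ) : ℝ) (by positivity) (by linarith)
      refine hb.trans ?_
      have h1 : ‖w‖ ≤ ‖s‖ + 1 := by
        have h := hw.2
        rw [Metric.mem_ball, dist_eq_norm] at h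
        have := norm_le_norm_add_norm_sub' w s
        linarith
      have h2 : (1 : ℝ) ≤ ((1 + n : ℕ) : ℝ) := by exact_mod_cast (by omega : 1 ≤ 1 + n)
      rw [pow_one]
      gcongr ?_ * ?_
      · push_cast; linarith
      · apply Real.rpow_le_rpow_of_exponent_le h2
        push_cast; linarith)
  exact this.differentiableAt (hU.mem_nhds hsU)

lemma eta_eq_of_one_lt {s : ℂ} (hs : 1 < s.re) :
    (Dk 0 s (1 : ℕ) + Sk 1 s 1) / 2 = (1 - 2 ^ (1 - s)) * riemannZeta s := by
  have h1 := Sk_succ (k := 0) (s := s) (X := 1) le_rfl (by linarith) (by simpa using hs)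
  rw [zero_add] at h1
  rw [h1]
  have h0 : Sk 0 s 1 = (1 - 2 ^ (1 - s)) * riemannZeta s := by
    have hz := zeta_eq_tsum_one_div_nat_add_one_cpow hs
    have hsm : Summable (fun n : ℕ => 1 / ((n : ℂ) + 1) ^ s) := by
      have := (summable_nat_add_iff 1).mpr (Complex.summable_one_div_nat_cpow.mpr hs)
      simpa using this
    have he : Summable (fun n : ℕ => 1 / (((2 * n : ℕ) : ℂ) + 1) ^ s) :=
      hsm.comp_injective (i := fun n : ℕ => 2 * n) (fun a b h => by simpa using h)
    have ho : Summable (fun n : ℕ => 1 / (((2 * n + 1 : ℕ) : ℂ) + 1) ^ s) :=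
      hsm.comp_injective (i := fun n : ℕ => 2 * n + 1) (fun a b h => by simpa using h)
    have hsplit := tsum_even_add_odd (f := fun n : ℕ => 1 / ((n : ℂ) + 1) ^ s) he ho
    have hs0 := Sk_summable_norm (k := 0) (s := s) (X := 1) le_rfl (by linarith) (by simpa using hs)
    have hterm : ∀ n : ℕ, Dk 0 s ((1 + n : ℕ) : ℝ) = 1 / ((n : ℂ) + 1) ^ s := by
      intro n
      simp only [Dk]
      rw [Complex.cpow_neg, one_div]
      push_cast
      rw [add_comm]
    have hsplit2 := tsum_even_add_odd (f := fun n : ℕ => (-1 : ℂ) ^ n * Dk 0 s (1 + n : ℕ))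
      (hs0.comp_injective (i := fun n : ℕ => 2 * n) (fun a b h => by simpa using h))
      (hs0.comp_injective (i := fun n : ℕ => 2 * n + 1) (fun a b h => by simpa using h))
    simp only [hterm, pow_mul, pow_succ, neg_one_sq, one_pow, one_mul, pow_zero, mul_neg, mul_one,
      neg_mul, neg_neg] at hsplit2
    rw [tsum_neg] at hsplit2
    have hodd : ∑' n : ℕ, 1 / (((2 * n + 1 : ℕ) : ℂ) + 1) ^ s = 2 ^ (-s) * riemannZeta s := by
      rw [hz, ← tsum_mul_left]
      congr 1
      funext n
      have : (((2 * n + 1 : ℕ) : ℂ) + 1) = ((2 : ℝ) : ℂ) * (((n : ℝ) + 1 : ℝ) : ℂ) := by push_cast; ring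
      rw [this, Complex.mul_cpow_ofReal_nonneg (by norm_num) (by positivity), Complex.cpow_neg]
      push_cast
      rw [one_div, one_div, mul_inv]
    have h2 : (2 : ℂ) ^ (1 - s) = 2 * 2 ^ (-s) := by
      rw [sub_eq_add_neg, Complex.cpow_add _ _ (by norm_num), Complex.cpow_one]
    have hS : Sk 0 s 1 = ∑' n : ℕ, (-1 : ℂ) ^ n * (1 / ((n : ℂ) + 1) ^ s) := by
      simp only [Sk, hterm]
    rw [hS, ← hsplit2, h2, hodd]
    rw [hodd, ← hz] at hsplit
    linear_combination hsplit
  rw [h0]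
  ring

lemma eta_eq {s : ℂ} (hs : 0 < s.re) (hs1 : s.re < 1) :
    (Dk 0 s (1 : ℕ) + Sk 1 s 1) / 2 = (1 - 2 ^ (1 - s)) * riemannZeta s := by
  let U1 : Set ℂ := {w | 0 < w.re} ∩ {w | w.re < 1}
  let U2 : Set ℂ := {w | 0 < w.re} ∩ {w | 0 < w.im}
  let U3 : Set ℂ := {w | 1 < w.re}
  have c1 : Convex ℝ U1 := (convex_halfSpace_re_gt 0).inter (convex_halfSpace_re_lt 1)
  have c2 : Convex ℝ U2 := (convex_halfSpace_re_gt 0).inter (convex_halfSpace_im_gt 0)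
  have c3 : Convex ℝ U3 := convex_halfSpace_re_gt 1
  have hc : IsPreconnected (U1 ∪ U2 ∪ U3) := by
    apply IsPreconnected.union (2 + I) _ _ _ c3.isPreconnected
    · right; simp [U2]
    · simp [U3]
    apply IsPreconnected.union (1 / 2 + I) _ _ c1.isPreconnected c2.isPreconnected
    · simp [U1]; norm_num
    · simp [U2]
  have hopen : IsOpen (U1 ∪ U2 ∪ U3) :=
    (((isOpen_lt continuous_const Complex.continuous_re).inter
      (isOpen_lt Complex.continuous_re continuous_const)).union
    ((isOpen_lt continuous_const Complex.continuous_re).inter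
      (isOpen_lt continuous_const Complex.continuous_im))).union
    (isOpen_lt continuous_const Complex.continuous_re)
  have hre : ∀ w ∈ U1 ∪ U2 ∪ U3, 0 < w.re ∧ w ≠ 1 := by
    rintro w ((h | h) | h)
    · refine ⟨h.1, ?_⟩
      rintro rfl
      exact absurd h.2 (by simp)
    · refine ⟨h.1, ?_⟩
      rintro rfl
      exact absurd h.2 (by simp)
    · have h' : 1 < w.re := h
      refine ⟨by linarith, ?_⟩
      rintro rfl
      simp at h'
  have hf : AnalyticOnNhd ℂ (fun w => (Dk 0 w (1 : ℕ) + Sk 1 w 1) / 2) (U1 ∪ U2 ∪ U3) := by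
    apply DifferentiableOn.analyticOnNhd _ hopen
    intro w hw
    apply DifferentiableAt.differentiableWithinAt
    apply DifferentiableAt.div_const
    apply DifferentiableAt.add _ (Sk_one_diff (hre w hw).1)
    simp only [Dk]
    exact (differentiableAt_id.neg).const_cpow (Or.inl (by simp))
  have hg : AnalyticOnNhd ℂ (fun w => (1 - 2 ^ (1 - w)) * riemannZeta w) (U1 ∪ U2 ∪ U3) := by
    apply DifferentiableOn.analyticOnNhd _ hopen
    intro w hw
    apply DifferentiableAt.differentiableWithinAt
    apply DifferentiableAt.mul _ (differentiableAt_riemannZeta (hre w hw).2)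
    apply DifferentiableAt.const_sub
    exact (differentiableAt_id.const_sub 1).const_cpow (Or.inl (by simp))
  have h2 : (2 : ℂ) ∈ U3 := by simp [U3]
  have := hf.eqOn_of_preconnected_of_eventuallyEq hg hc (z₀ := 2) (Or.inr h2) (by
    have : U3 ∈ nhds (2 : ℂ) := (isOpen_lt continuous_const Complex.continuous_re).mem_nhds h2
    filter_upwards [this] with w hw
    exact eta_eq_of_one_lt hw)
  exact this (Or.inl (Or.inl ⟨hs, hs1⟩))


lemma ms_general (S : Finset ℕ) (b : ℕ → ℂ) (lam : ℕ → ℝ) (F : ℝ → ℝ) (hF : Continuous F) (A B : ℝ) :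
    ∫ u in A..B, F u * ‖∑ n ∈ S, b n * cexp (I * lam n * u)‖ ^ 2 ≤
    ∑ m ∈ S, ∑ n ∈ S, ‖b m‖ * ‖b n‖ * ‖∫ u in A..B, (F u : ℂ) * cexp (I * ((lam m - lam n : ℝ) : ℂ) * u)‖ := by
  have h1 : ((∫ u in A..B, F u * ‖∑ n ∈ S, b n * cexp (I * lam n * u)‖ ^ 2 : ℝ) : ℂ) =
      ∑ m ∈ S, ∑ n ∈ S, b m * (starRingEnd ℂ) (b n) * ∫ u in A..B, (F u : ℂ) * cexp (I * ((lam m - lam n : ℝ) : ℂ) * u) := by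
    rw [← intervalIntegral.integral_ofReal]
    have h2 : ∀ u : ℝ, ((F u * ‖∑ n ∈ S, b n * cexp (I * lam n * u)‖ ^ 2 : ℝ) : ℂ) =
        ∑ m ∈ S, ∑ n ∈ S, b m * (starRingEnd ℂ) (b n) * ((F u : ℂ) * cexp (I * ((lam m - lam n : ℝ) : ℂ) * u)) := by
      intro u
      push_cast
      rw [← Complex.mul_conj', map_sum, Finset.sum_mul_sum, Finset.mul_sum]
      refine Finset.sum_congr rfl (fun m _ => ?_)
      rw [Finset.mul_sum]
      refine Finset.sum_congr rfl (fun n _ => ?_)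
      have : cexp (I * ((lam m : ℂ) - lam n) * u) = cexp (I * lam m * u) * (starRingEnd ℂ) (cexp (I * lam n * u)) := by
        rw [← Complex.exp_conj, ← Complex.exp_add]
        congr 1
        simp
        ring
      rw [this, map_mul]
      ring
    rw [intervalIntegral.integral_congr (fun u _ => h2 u)]
    rw [intervalIntegral.integral_finsetSum]
    · refine Finset.sum_congr rfl (fun m _ => ?_)
      rw [intervalIntegral.integral_finsetSum]
      · refine Finset.sum_congr rfl (fun n _ => ?_)
        rw [intervalIntegral.integral_const_mul]
      · intro n _
        apply Continuous.intervalIntegrable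
        fun_prop
    · intro m _
      apply Continuous.intervalIntegrable
      fun_prop
  have h3 := le_abs_self (∫ u in A..B, F u * ‖∑ n ∈ S, b n * cexp (I * lam n * u)‖ ^ 2)
  rw [← Real.norm_eq_abs, ← Complex.norm_real, h1] at h3
  refine h3.trans ((norm_sum_le _ _).trans (Finset.sum_le_sum (fun m _ => (norm_sum_le _ _).trans
    (Finset.sum_le_sum (fun n _ => ?_)))))
  rw [norm_mul, norm_mul, RCLike.norm_conj]

lemma alt_sum (f : ℕ → ℂ) (Y : ℕ) :
    ∑ n ∈ Finset.Icc 1 (2 * Y), (-1 : ℂ) ^ (n - 1) * f n + 2 * ∑ n ∈ Finset.Icc 1 Y, f (2 * n)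
      = ∑ n ∈ Finset.Icc 1 (2 * Y), f n := by
  induction Y with
  | zero => simp
  | succ Y ih =>
    rw [show 2 * (Y + 1) = 2 * Y + 1 + 1 by ring]
    rw [Finset.sum_Icc_succ_top (by omega), Finset.sum_Icc_succ_top (by omega),
      Finset.sum_Icc_succ_top (by omega), Finset.sum_Icc_succ_top (by omega),
      Finset.sum_Icc_succ_top (by omega), ← ih]
    simp only [Nat.add_sub_cancel, pow_add, pow_mul]
    rw [show 2 * (Y + 1) = 2 * Y + 1 + 1 by ring]
    norm_num
    ring

noncomputable def ac (Y n : ℕ) : ℂ := if n ≤ 2 * Y then 1 else (-1) ^ (n - 1)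

lemma ac_norm (Y n : ℕ) : ‖ac Y n‖ = 1 := by
  unfold ac; split_ifs <;> simp

lemma sum_split (f : ℕ → ℂ) (Y X : ℕ) (h : 2 * Y ≤ X) :
    ∑ n ∈ Finset.Icc 1 X, (-1 : ℂ) ^ (n - 1) * f n - ∑ n ∈ Finset.Icc 1 Y, f n
      + 2 * ∑ n ∈ Finset.Icc 1 Y, f (2 * n) = ∑ n ∈ Finset.Ioc Y X, ac Y n * f n := by
  have e : ∀ a b : ℕ, Finset.Icc (a + 1) b = Finset.Ioc a b := fun a b => by ext; simp
  have h1 := alt_sum f Y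
  rw [show (1 : ℕ) = 0 + 1 by rfl] at *
  simp only [e] at *
  have h2 := Finset.sum_Ioc_consecutive (fun n => (-1 : ℂ) ^ (n - 1) * f n) (Nat.zero_le (2 * Y)) h
  have h3 := Finset.sum_Ioc_consecutive (fun n => ac Y n * f n) (by omega : Y ≤ 2 * Y) h
  have h4 := Finset.sum_Ioc_consecutive f (Nat.zero_le Y) (by omega : Y ≤ 2 * Y)
  have h5 : ∑ n ∈ Finset.Ioc Y (2 * Y), ac Y n * f n = ∑ n ∈ Finset.Ioc Y (2 * Y), f n :=
    Finset.sum_congr rfl (fun n hn => by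
      rw [Finset.mem_Ioc] at hn
      rw [ac, if_pos hn.2, one_mul])
  have h6 : ∑ n ∈ Finset.Ioc (2 * Y) X, ac Y n * f n = ∑ n ∈ Finset.Ioc (2 * Y) X, (-1 : ℂ) ^ (n - 1) * f n :=
    Finset.sum_congr rfl (fun n hn => by
      rw [Finset.mem_Ioc] at hn
      rw [ac, if_neg (by omega)])
  rw [← h3, h5, h6, ← h2]
  linear_combination h1 - h4

lemma zeta_split {s : ℂ} (hs : 0 < s.re) (hs1 : s.re < 1) (Y X : ℕ) (h : 2 * Y ≤ X) :
    (1 - 2 ^ (1 - s)) * (riemannZeta s - ∑ n ∈ Finset.Icc 1 Y, (n : ℂ) ^ (-s)) =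
    ∑ n ∈ Finset.Ioc Y X, ac Y n * (n : ℂ) ^ (-s)
      + (-1) ^ X * ((Dk 0 s (X + 1 : ℕ) + Sk 1 s (X + 1)) / 2) := by
  rw [mul_sub, ← eta_eq hs hs1, eta_partial hs X, ← sum_split _ Y X h]
  have : ∑ n ∈ Finset.Icc 1 Y, ((2 * n : ℕ) : ℂ) ^ (-s) = 2 ^ (-s) * ∑ n ∈ Finset.Icc 1 Y, (n : ℂ) ^ (-s) := by
    rw [Finset.mul_sum]
    refine Finset.sum_congr rfl (fun n _ => ?_)
    rw [Nat.cast_mul, Complex.natCast_mul_natCast_cpow]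
    rfl
  rw [this, show (1 - s) = 1 + (-s) by ring, Complex.cpow_add _ _ (by norm_num), Complex.cpow_one]
  ring

lemma int_exp_bound {l : ℝ} (hl : l ≠ 0) (A B : ℝ) :
    ‖∫ u in A..B, cexp (I * (l : ℂ) * u)‖ ≤ 2 / |l| := by
  have hne : I * (l : ℂ) ≠ 0 := mul_ne_zero I_ne_zero (by exact_mod_cast hl)
  rw [integral_exp_mul_complex hne, norm_div, norm_mul, norm_I, one_mul, Complex.norm_real, Real.norm_eq_abs]
  gcongr
  refine (norm_sub_le _ _).trans ?_
  have : ∀ x : ℝ, ‖cexp (I * l * x)‖ = 1 := fun x => by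
    rw [show I * (l : ℂ) * x = ((l * x : ℝ) : ℂ) * I by push_cast; ring, Complex.norm_exp_ofReal_mul_I]
  rw [this, this]; norm_num

lemma nat_cpow_exp {n : ℕ} (hn : 1 ≤ n) (σ u : ℝ) :
    (n : ℂ) ^ (-((σ : ℂ) + u * I)) = (((n : ℝ) ^ (-σ) : ℝ) : ℂ) * cexp (I * ((-Real.log n : ℝ) : ℂ) * u) := by
  have h0 : (n : ℂ) ≠ 0 := by exact_mod_cast (by omega : n ≠ 0)
  have hp : (0 : ℝ) < n := by exact_mod_cast hn
  rw [neg_add, Complex.cpow_add _ _ h0]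
  congr 1
  · rw [Complex.ofReal_cpow hp.le]; simp
  · rw [Complex.cpow_def_of_ne_zero h0]
    congr 1
    rw [Complex.natCast_log.symm]
    push_cast; ring


noncomputable def Zq (q : ℝ) : ℝ := ∑' n : ℕ, (n : ℝ) ^ (-(1 + q))

lemma Zq_nonneg (q : ℝ) : 0 ≤ Zq q := tsum_nonneg (fun n => by positivity)

lemma sum_rpow_le {q p : ℝ} (hq : 0 < q) (hp : p ≤ 1 + q) (X : ℕ) :
    ∑ n ∈ Finset.Icc 1 X, (n : ℝ) ^ (-p) ≤ (X : ℝ) ^ (1 + q - p) * Zq q := by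
  have hs : Summable (fun n : ℕ => (n : ℝ) ^ (-(1 + q))) := Real.summable_nat_rpow.mpr (by linarith)
  calc _ ≤ ∑ n ∈ Finset.Icc 1 X, (X : ℝ) ^ (1 + q - p) * (n : ℝ) ^ (-(1 + q)) := by
        refine Finset.sum_le_sum (fun n hn => ?_)
        rw [Finset.mem_Icc] at hn
        have hn0 : (0 : ℝ) < n := by exact_mod_cast hn.1
        have hnX : (n : ℝ) ≤ X := by exact_mod_cast hn.2
        rw [show -p = (1 + q - p) + (-(1 + q)) by ring, Real.rpow_add hn0]
        gcongr
    _ = (X : ℝ) ^ (1 + q - p) * ∑ n ∈ Finset.Icc 1 X, (n : ℝ) ^ (-(1 + q)) := by rw [Finset.mul_sum]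
    _ ≤ _ := by
        gcongr
        exact hs.sum_le_tsum _ (fun n _ => by positivity)

lemma log_lower {m n : ℕ} (hm : 1 ≤ m) (hmn : m < n) {σ : ℝ} (hσ : 0 ≤ σ) :
    (m : ℝ) ^ (-σ) * (n : ℝ) ^ (-σ) * (1 / |Real.log n - Real.log m|) ≤
      (m : ℝ) ^ (-σ) * (n : ℝ) ^ (-σ) + (m : ℝ) ^ (-(2 * σ - 1)) * (1 / ((n : ℝ) - m)) := by
  have hm0 : (0 : ℝ) < m := by exact_mod_cast hm
  have hmn' : (m : ℝ) < n := by exact_mod_cast hmn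
  have hn0 : (0 : ℝ) < n := by linarith
  have hd : 0 < (n : ℝ) - m := by linarith
  have h1 : ((n : ℝ) - m) / n ≤ Real.log n - Real.log m := by
    have := Real.log_le_sub_one_of_pos (show 0 < (m : ℝ) / n by positivity)
    rw [Real.log_div hm0.ne' hn0.ne'] at this
    rw [sub_div, div_self hn0.ne']; linarith
  have h2 : 0 < ((n : ℝ) - m) / n := by positivity
  have h3 : 1 / |Real.log n - Real.log m| ≤ 1 + m / ((n : ℝ) - m) := by
    rw [abs_of_pos (by linarith)]
    calc _ ≤ 1 / (((n : ℝ) - m) / n) := by gcongr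
      _ = _ := by field_simp; ring
  have h4 : (m : ℝ) ^ (-σ) * (n : ℝ) ^ (-σ) * m ≤ (m : ℝ) ^ (-(2 * σ - 1)) := by
    have : (m : ℝ) ^ (-(2 * σ - 1)) = (m : ℝ) ^ (-σ) * (m : ℝ) ^ (-σ) * m := by
      rw [show -(2 * σ - 1) = -σ + -σ + 1 by ring, Real.rpow_add hm0, Real.rpow_add hm0, Real.rpow_one]
    rw [this]
    gcongr ?_ * ?_ * ?_
    exact Real.rpow_le_rpow_of_nonpos hm0 hmn'.le (by linarith)
  calc _ ≤ (m : ℝ) ^ (-σ) * (n : ℝ) ^ (-σ) * (1 + m / ((n : ℝ) - m)) := by gcongr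
    _ = (m : ℝ) ^ (-σ) * (n : ℝ) ^ (-σ) + ((m : ℝ) ^ (-σ) * (n : ℝ) ^ (-σ) * m) * (1 / ((n : ℝ) - m)) := by ring
    _ ≤ _ := by gcongr

lemma offdiag_term {m n X : ℕ} (hm : m ∈ Finset.Icc 1 X) (hn : n ∈ Finset.Icc 1 X) (hmn : m ≠ n) {σ : ℝ} (hσ : 0 ≤ σ) :
    (m : ℝ) ^ (-σ) * (n : ℝ) ^ (-σ) * (1 / |Real.log m - Real.log n|) ≤
      (m : ℝ) ^ (-σ) * (n : ℝ) ^ (-σ) + ((m : ℝ) ^ (-(2 * σ - 1)) + (n : ℝ) ^ (-(2 * σ - 1))) * (1 / |(n : ℝ) - m|) := by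
  rw [Finset.mem_Icc] at hm hn
  rcases lt_or_gt_of_ne hmn with h | h
  · have := log_lower hm.1 h hσ
    have hd : 0 < (n : ℝ) - m := sub_pos.mpr (by exact_mod_cast h)
    rw [abs_sub_comm, abs_of_pos hd]
    refine this.trans ?_
    gcongr
    exact le_add_of_nonneg_right (by positivity)
  · have := log_lower hn.1 h hσ
    have hd : 0 < (m : ℝ) - n := sub_pos.mpr (by exact_mod_cast h)
    rw [abs_sub_comm (n : ℝ), abs_of_pos hd]
    rw [mul_comm ((m : ℝ) ^ (-σ))]
    refine this.trans ?_
    gcongr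
    exact le_add_of_nonneg_left (by positivity)

lemma sum_recip (m X : ℕ) (hm : m ∈ Finset.Icc 1 X) :
    ∑ n ∈ Finset.Icc 1 X, (if m = n then 0 else 1 / |(n : ℝ) - m|) ≤ 2 * ∑ j ∈ Finset.Icc 1 X, (j : ℝ) ^ (-(1 : ℝ)) := by
  rw [Finset.mem_Icc] at hm
  have hnn : ∀ j : ℕ, (0 : ℝ) ≤ (j : ℝ) ^ (-(1 : ℝ)) := fun j => by positivity
  have h1 : ∀ n ∈ Finset.Icc 1 X, (if m = n then 0 else 1 / |(n : ℝ) - m|) ≤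
      ((if m < n then ((n - m : ℕ) : ℝ) ^ (-(1 : ℝ)) else 0) + (if n < m then ((m - n : ℕ) : ℝ) ^ (-(1 : ℝ)) else 0)) := by
    intro n _
    rcases lt_trichotomy m n with h | h | h
    · rw [if_neg h.ne, if_pos h, if_neg (by omega), Nat.cast_sub h.le, Real.rpow_neg_one, abs_of_pos (sub_pos.mpr (by exact_mod_cast h))]
      simp
    · simp [h]
    · rw [if_neg h.ne', if_pos h, if_neg (by omega), Nat.cast_sub h.le, Real.rpow_neg_one, abs_sub_comm, abs_of_pos (sub_pos.mpr (by exact_mod_cast h))]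
      simp
  refine (Finset.sum_le_sum h1).trans ?_
  rw [Finset.sum_add_distrib, two_mul]
  rw [← Finset.sum_filter, ← Finset.sum_filter]
  refine add_le_add ?_ ?_
  · rw [← Finset.sum_image (f := fun j : ℕ => (j : ℝ) ^ (-(1 : ℝ))) (g := fun n => n - m)]
    · refine Finset.sum_le_sum_of_subset_of_nonneg ?_ (fun j _ _ => hnn j)
      intro j hj
      simp at hj ⊢; omega
    · intro a ha b hb hab
      simp at ha hb hab; omega
  · rw [← Finset.sum_image (f := fun j : ℕ => (j : ℝ) ^ (-(1 : ℝ))) (g := fun n => m - n)]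
    · refine Finset.sum_le_sum_of_subset_of_nonneg ?_ (fun j _ _ => hnn j)
      intro j hj
      simp at hj ⊢; omega
    · intro a ha b hb hab
      simp at ha hb hab; omega

lemma offdiag_sum {σ q : ℝ} (hσ : 1 / 2 < σ) (hσ1 : σ < 1) (hq : 0 < q) (X : ℕ) (hX : 1 ≤ X) :
    ∑ m ∈ Finset.Icc 1 X, ∑ n ∈ Finset.Icc 1 X,
      (if m = n then 0 else (m : ℝ) ^ (-σ) * (n : ℝ) ^ (-σ) * (1 / |Real.log m - Real.log n|)) ≤
      5 * Zq q ^ 2 * (X : ℝ) ^ (1 + 2 * q - (2 * σ - 1)) := by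
  have hX0 : (0 : ℝ) < X := by exact_mod_cast hX
  have hZ := Zq_nonneg q
  set δ := 2 * σ - 1 with hδ
  set H := ∑ j ∈ Finset.Icc 1 X, (j : ℝ) ^ (-(1 : ℝ)) with hH
  have hb1 := sum_rpow_le hq (show σ ≤ 1 + q by linarith) X
  have hb2 := sum_rpow_le hq (show δ ≤ 1 + q by linarith) X
  have hb3 := sum_rpow_le hq (show 1 ≤ 1 + q by linarith) X
  have hdnn : 0 ≤ ∑ m ∈ Finset.Icc 1 X, (m : ℝ) ^ (-δ) := Finset.sum_nonneg (fun n _ => by positivity)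
  have hsnn : 0 ≤ ∑ m ∈ Finset.Icc 1 X, (m : ℝ) ^ (-σ) := Finset.sum_nonneg (fun n _ => by positivity)
  have hHnn : 0 ≤ H := Finset.sum_nonneg (fun n _ => by positivity)
  have hA : ∑ m ∈ Finset.Icc 1 X, ∑ n ∈ Finset.Icc 1 X, (m : ℝ) ^ (-δ) * (if m = n then 0 else 1 / |(n : ℝ) - m|)
      ≤ (∑ m ∈ Finset.Icc 1 X, (m : ℝ) ^ (-δ)) * (2 * H) := by
    rw [Finset.sum_mul]
    refine Finset.sum_le_sum (fun m hm => ?_)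
    rw [← Finset.mul_sum]
    gcongr
    exact sum_recip m X hm
  have hB : ∑ m ∈ Finset.Icc 1 X, ∑ n ∈ Finset.Icc 1 X, (n : ℝ) ^ (-δ) * (if m = n then 0 else 1 / |(n : ℝ) - m|)
      ≤ (∑ m ∈ Finset.Icc 1 X, (m : ℝ) ^ (-δ)) * (2 * H) := by
    rw [Finset.sum_comm]
    refine le_trans (le_of_eq ?_) hA
    refine Finset.sum_congr rfl (fun m _ => Finset.sum_congr rfl (fun n _ => ?_))
    rw [abs_sub_comm]; simp only [eq_comm]
  calc _ ≤ ∑ m ∈ Finset.Icc 1 X, ∑ n ∈ Finset.Icc 1 X, ((m : ℝ) ^ (-σ) * (n : ℝ) ^ (-σ)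
        + (m : ℝ) ^ (-δ) * (if m = n then 0 else 1 / |(n : ℝ) - m|)
        + (n : ℝ) ^ (-δ) * (if m = n then 0 else 1 / |(n : ℝ) - m|)) := by
        refine Finset.sum_le_sum (fun m hm => Finset.sum_le_sum (fun n hn => ?_))
        split_ifs with h
        · simp; positivity
        · have := offdiag_term hm hn h (σ := σ) (by linarith)
          rw [← hδ] at this
          linarith
    _ = (∑ m ∈ Finset.Icc 1 X, (m : ℝ) ^ (-σ)) * (∑ m ∈ Finset.Icc 1 X, (m : ℝ) ^ (-σ))
      + ∑ m ∈ Finset.Icc 1 X, ∑ n ∈ Finset.Icc 1 X, (m : ℝ) ^ (-δ) * (if m = n then 0 else 1 / |(n : ℝ) - m|)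
      + ∑ m ∈ Finset.Icc 1 X, ∑ n ∈ Finset.Icc 1 X, (n : ℝ) ^ (-δ) * (if m = n then 0 else 1 / |(n : ℝ) - m|) := by
        simp only [Finset.sum_add_distrib, Finset.sum_mul_sum]
    _ ≤ ((X : ℝ) ^ (1 + q - σ) * Zq q) * ((X : ℝ) ^ (1 + q - σ) * Zq q)
        + ((X : ℝ) ^ (1 + q - δ) * Zq q) * (2 * ((X : ℝ) ^ (1 + q - 1) * Zq q))
        + ((X : ℝ) ^ (1 + q - δ) * Zq q) * (2 * ((X : ℝ) ^ (1 + q - 1) * Zq q)) := by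
        refine add_le_add (add_le_add ?_ (hA.trans ?_)) (hB.trans ?_)
        · gcongr
        · gcongr
        · gcongr
    _ = _ := by
        have e1 : (X : ℝ) ^ (1 + q - σ) * (X : ℝ) ^ (1 + q - σ) = (X : ℝ) ^ (1 + 2 * q - δ) := by
          rw [← Real.rpow_add hX0]; congr 1; rw [hδ]; ring
        have e2 : (X : ℝ) ^ (1 + q - δ) * (X : ℝ) ^ (1 + q - 1) = (X : ℝ) ^ (1 + 2 * q - δ) := by
          rw [← Real.rpow_add hX0]; congr 1; ring
        linear_combination (Zq q ^ 2) * e1 + 4 * (Zq q ^ 2) * e2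

/-- Mean square of the middle Dirichlet polynomial. -/
lemma poly_ms {σ1 σ q T : ℝ} (h1 : 1 / 2 < σ1) (h2 : σ1 ≤ σ) (h3 : σ < 1) (hq : 0 < q) (hT : 0 ≤ T)
    (Y X : ℕ) (hX : 1 ≤ X) (a : ℕ → ℂ) (ha : ∀ n, ‖a n‖ = 1) :
    ∫ u in (-T)..T, ‖∑ n ∈ Finset.Ioc Y X, a n * (n : ℂ) ^ (-((σ : ℂ) + u * I))‖ ^ 2 ≤
      2 * T * ∑ n ∈ Finset.Ioc Y X, (n : ℝ) ^ (-(2 * σ1)) + 10 * Zq q ^ 2 * (X : ℝ) ^ (1 + 2 * q - (2 * σ1 - 1)) := by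
  have hg := ms_general (Finset.Ioc Y X) (fun n => a n * (((n : ℝ) ^ (-σ) : ℝ) : ℂ)) (fun n => -Real.log n)
    (fun _ => 1) continuous_const (-T) T
  have hnorm : ∀ n : ℕ, ‖a n * (((n : ℝ) ^ (-σ) : ℝ) : ℂ)‖ = (n : ℝ) ^ (-σ) := fun n => by
    rw [norm_mul, ha, one_mul, Complex.norm_real, Real.norm_of_nonneg (by positivity)]
  simp only [hnorm] at hg
  have hL : ∫ u in (-T)..T, ‖∑ n ∈ Finset.Ioc Y X, a n * (n : ℂ) ^ (-((σ : ℂ) + u * I))‖ ^ 2 =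
     ∫ u in (-T)..T, 1 * ‖∑ n ∈ Finset.Ioc Y X, a n * (((n : ℝ) ^ (-σ) : ℝ) : ℂ) * cexp (I * ((-Real.log n : ℝ) : ℂ) * u)‖ ^ 2 := by
    refine intervalIntegral.integral_congr (fun u _ => ?_)
    simp only [one_mul]
    congr 2
    refine Finset.sum_congr rfl (fun n hn => ?_)
    rw [Finset.mem_Ioc] at hn
    rw [nat_cpow_exp (by omega)]; ring
  rw [hL]
  refine hg.trans ?_
  have hterm : ∀ m ∈ Finset.Ioc Y X, ∀ n ∈ Finset.Ioc Y X,
      (m : ℝ) ^ (-σ) * (n : ℝ) ^ (-σ) * ‖∫ u in (-T)..T, ((1 : ℝ) : ℂ) * cexp (I * ((-Real.log m - -Real.log n : ℝ) : ℂ) * u)‖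
      ≤ (if m = n then 2 * T * (n : ℝ) ^ (-(2 * σ1)) else 0) +
        2 * (if m = n then 0 else (m : ℝ) ^ (-σ1) * (n : ℝ) ^ (-σ1) * (1 / |Real.log m - Real.log n|)) := by
    intro m hm n hn
    rw [Finset.mem_Ioc] at hm hn
    have hm1 : (1 : ℝ) ≤ m := by exact_mod_cast (by omega : 1 ≤ m)
    have hn1 : (1 : ℝ) ≤ n := by exact_mod_cast (by omega : 1 ≤ n)
    have em : (m : ℝ) ^ (-σ) ≤ (m : ℝ) ^ (-σ1) := Real.rpow_le_rpow_of_exponent_le hm1 (by linarith)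
    have en : (n : ℝ) ^ (-σ) ≤ (n : ℝ) ^ (-σ1) := Real.rpow_le_rpow_of_exponent_le hn1 (by linarith)
    by_cases h : m = n
    · subst h
      simp only [if_true, mul_zero, add_zero]
      have : (m : ℝ) ^ (-(2 * σ1)) = (m : ℝ) ^ (-σ1) * (m : ℝ) ^ (-σ1) := by
        rw [← Real.rpow_add (by linarith)]; congr 1; ring
      rw [this]
      have e : ‖∫ u in (-T)..T, ((1 : ℝ) : ℂ) * cexp (I * ((-Real.log m - -Real.log m : ℝ) : ℂ) * u)‖ = 2 * T := by
        simp
        rw [← Complex.ofReal_add, Complex.norm_real, Real.norm_of_nonneg (by linarith)]; ring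
      rw [e, mul_comm]
      gcongr
    · simp only [if_neg h, zero_add, Complex.ofReal_one, one_mul]
      have hl : -Real.log m - -Real.log n ≠ 0 := by
        intro h0
        apply h
        have : Real.log m = Real.log n := by linarith
        have := Real.log_injOn_pos (Set.mem_Ioi.mpr (by linarith)) (Set.mem_Ioi.mpr (by linarith)) this
        exact_mod_cast this
      have hb := int_exp_bound hl (-T) T
      have e : |-Real.log m - -Real.log n| = |Real.log m - Real.log n| := by
        rw [abs_sub_comm]; congr 1; ring
      rw [e] at hb
      calc _ ≤ (m : ℝ) ^ (-σ1) * (n : ℝ) ^ (-σ1) * (2 / |Real.log m - Real.log n|) := by gcongr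
        _ = _ := by ring
  refine (Finset.sum_le_sum (fun m hm => Finset.sum_le_sum (fun n hn => hterm m hm n hn))).trans ?_
  simp only [Finset.sum_add_distrib]
  refine add_le_add ?_ ?_
  · rw [Finset.mul_sum]
    refine Finset.sum_le_sum (fun m hm => ?_)
    rw [Finset.sum_ite_eq]
    simp [hm]
  · simp only [← Finset.mul_sum]
    have := offdiag_sum h1 (by linarith) hq X hX
    have hsub : Finset.Ioc Y X ⊆ Finset.Icc 1 X := fun j hj => by simp at hj ⊢; omega
    have h0 : ∀ m n : ℕ, (0 : ℝ) ≤ (if m = n then 0 else (m : ℝ) ^ (-σ1) * (n : ℝ) ^ (-σ1) * (1 / |Real.log m - Real.log n|)) := by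
      intro m n; split_ifs <;> positivity
    have h5 : ∑ m ∈ Finset.Ioc Y X, ∑ n ∈ Finset.Ioc Y X, (if m = n then 0 else (m : ℝ) ^ (-σ1) * (n : ℝ) ^ (-σ1) * (1 / |Real.log m - Real.log n|)) ≤
      ∑ m ∈ Finset.Icc 1 X, ∑ n ∈ Finset.Icc 1 X, (if m = n then 0 else (m : ℝ) ^ (-σ1) * (n : ℝ) ^ (-σ1) * (1 / |Real.log m - Real.log n|)) :=
      (Finset.sum_le_sum (fun m _ => Finset.sum_le_sum_of_subset_of_nonneg hsub (fun n _ _ => h0 m n))).trans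
        (Finset.sum_le_sum_of_subset_of_nonneg hsub (fun m _ _ => Finset.sum_nonneg (fun n _ => h0 m n)))
    linarith


lemma factor_lower {σ2 : ℝ} (h2 : σ2 < 1) {s : ℂ} (hs : s.re ≤ σ2) :
    (2 : ℝ) ^ (1 - σ2) - 1 ≤ ‖(1 : ℂ) - 2 ^ (1 - s)‖ := by
  have h : ‖(2 : ℂ) ^ (1 - s)‖ = (2 : ℝ) ^ (1 - s.re) := by
    have := Complex.norm_cpow_eq_rpow_re_of_pos (show (0 : ℝ) < 2 by norm_num) (1 - s)
    simpa using this
  have h3 := norm_sub_norm_le ((2 : ℂ) ^ (1 - s)) 1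
  rw [h, norm_one, norm_sub_rev] at h3
  have : (2 : ℝ) ^ (1 - σ2) ≤ (2 : ℝ) ^ (1 - s.re) := Real.rpow_le_rpow_of_exponent_le (by norm_num) (by linarith)
  linarith

/-- Residual bound with the choice of length. -/
lemma resid_choice {η : ℝ} (hη : 0 < η) (hη1 : η ≤ 1) : ∃ C : ℝ, 0 ≤ C ∧ ∃ T0 : ℝ, 1 ≤ T0 ∧ ∀ T, T0 ≤ T →
    ∀ s : ℂ, 1 / 2 < s.re → s.re < 1 → |s.im| ≤ T →
    ‖(Dk 0 s ((⌈T ^ (1 + η)⌉₊ + 1 : ℕ) : ℝ) + Sk 1 s (⌈T ^ (1 + η)⌉₊ + 1)) / 2‖ ≤ C * T ^ (-(1 / 2) : ℝ) := by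
  obtain ⟨k0, hk0⟩ := exists_nat_gt (5 / η)
  set k := k0 + 1 with hk
  have hkη : 5 ≤ η * (k + 1) := by
    rw [div_lt_iff₀ hη] at hk0
    push_cast [hk]
    nlinarith
  refine ⟨(k + 1) + 9 * C2 * 2 ^ (k + 1), by have := C2_nonneg; positivity, max (k + 2) (2 ^ (1 / η)), ?_, ?_⟩
  · exact le_max_of_le_left (by linarith [(Nat.cast_nonneg k : (0 : ℝ) ≤ k)])
  intro T hT s hs hs1 him
  have hkn : (0 : ℝ) ≤ k := Nat.cast_nonneg k
  have hTk : (k : ℝ) + 2 ≤ T := (le_max_left _ _).trans hT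
  have hT1 : 1 ≤ T := by linarith
  have hT0 : 0 < T := by linarith
  have hTη : 2 ≤ T ^ η := by
    have h : (2 : ℝ) ^ (1 / η) ≤ T := (le_max_right _ _).trans hT
    have := Real.rpow_le_rpow (by positivity) h hη.le
    rwa [← Real.rpow_mul (by norm_num), one_div, inv_mul_cancel₀ hη.ne', Real.rpow_one] at this
  set W := T ^ (1 + η) with hW
  have hWeq : W = T * T ^ η := by rw [hW, Real.rpow_add hT0, Real.rpow_one]
  have hWT : T ≤ W := by nlinarith
  set X := ⌈W⌉₊ + 1 with hX
  have hXW : W ≤ X := by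
    rw [hX]; push_cast; linarith [Nat.le_ceil W]
  have hXW2 : (X : ℝ) ≤ 3 * W := by
    have := Nat.ceil_lt_add_one (show 0 ≤ W by linarith)
    rw [hX]; push_cast; linarith
  have hs' : ‖s‖ ≤ 1 + T := by
    refine (Complex.norm_le_abs_re_add_abs_im s).trans ?_
    have : |s.re| ≤ 1 := by rw [abs_of_pos (by linarith)]; linarith
    linarith
  have hs2 : ‖s‖ + (k + 1) ≤ 2 * T := by linarith
  have hW2 : 2 * T ≤ W := by nlinarith
  have hb := resid_bound hs (X := X) (by omega) k (by omega) (by linarith)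
  refine hb.trans ?_
  have hX0 : (0 : ℝ) < X := by linarith
  have e1 : (X : ℝ) ^ (-(1 / 2) : ℝ) ≤ T ^ (-(1 / 2) : ℝ) :=
    Real.rpow_le_rpow_of_nonpos hT0 (hWT.trans hXW) (by norm_num)
  have e2 : ((‖s‖ + (k + 1)) / X) ^ (k + 1) ≤ 2 ^ (k + 1) * T ^ (-5 : ℝ) := by
    have a1 : (‖s‖ + (k + 1)) / X ≤ 2 * T ^ (-η) := by
      calc _ ≤ 2 * T / W := by gcongr
        _ = _ := by rw [hWeq, Real.rpow_neg hT0.le]; field_simp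
    calc _ ≤ (2 * T ^ (-η)) ^ (k + 1) := by gcongr
      _ = 2 ^ (k + 1) * T ^ (-η * (k + 1)) := by
        rw [mul_pow, ← Real.rpow_natCast (T ^ (-η)), ← Real.rpow_mul hT0.le]; push_cast; rfl
      _ ≤ _ := by
        gcongr
        linarith
  have e3 : (X : ℝ) ^ 2 ≤ 9 * T ^ (4 : ℝ) := by
    have : W ≤ T ^ (2 : ℝ) := Real.rpow_le_rpow_of_exponent_le hT1 (by linarith)
    calc _ ≤ (3 * T ^ (2 : ℝ)) ^ 2 := by gcongr; linarith
      _ = _ := by rw [mul_pow, ← Real.rpow_natCast (T ^ (2 : ℝ)), ← Real.rpow_mul hT0.le]; norm_num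
  have e4 : T ^ (-5 : ℝ) * T ^ (4 : ℝ) ≤ T ^ (-(1 / 2) : ℝ) := by
    rw [← Real.rpow_add hT0]; exact Real.rpow_le_rpow_of_exponent_le hT1 (by norm_num)
  have hC := C2_nonneg
  calc _ ≤ (k + 1) * T ^ (-(1 / 2) : ℝ) + C2 * ((2 ^ (k + 1) * T ^ (-5 : ℝ)) * (9 * T ^ (4 : ℝ))) := by gcongr
    _ = (k + 1) * T ^ (-(1 / 2) : ℝ) + 9 * C2 * 2 ^ (k + 1) * (T ^ (-5 : ℝ) * T ^ (4 : ℝ)) := by ring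
    _ ≤ (k + 1) * T ^ (-(1 / 2) : ℝ) + 9 * C2 * 2 ^ (k + 1) * T ^ (-(1 / 2) : ℝ) := by gcongr
    _ = _ := by ring

lemma nat_cpow_cont (n : ℕ) (hn : 1 ≤ n) (σ : ℝ) : Continuous (fun u : ℝ => (n : ℂ) ^ (-((σ : ℂ) + u * I))) := by
  have : (n : ℂ) ≠ 0 := by exact_mod_cast (by omega : n ≠ 0)
  refine Continuous.const_cpow (by fun_prop) (Or.inl this)

lemma zeta_line_cont {σ : ℝ} (hσ : σ ≠ 1) : Continuous (fun u : ℝ => riemannZeta ((σ : ℂ) + u * I)) := by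
  rw [continuous_iff_continuousAt]
  intro u
  have h1 : ((σ : ℂ) + u * I) ≠ 1 := by
    intro h
    have := congrArg Complex.re h
    simp at this
    exact hσ this
  exact ContinuousAt.comp (f := fun u : ℝ => (σ : ℂ) + u * I) (differentiableAt_riemannZeta h1).continuousAt (by fun_prop)

lemma tail_sum {p : ℝ} (hp : 1 < p) {ρ : ℝ} (hρ : 0 < ρ) : ∃ Y0 : ℕ, ∀ Y, Y0 ≤ Y → ∀ X,
    ∑ n ∈ Finset.Ioc Y X, (n : ℝ) ^ (-p) ≤ ρ := by
  have hs : Summable (fun n : ℕ => (n : ℝ) ^ (-p)) := Real.summable_nat_rpow.mpr (by linarith)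
  have := (summable_iff_vanishing_norm.mp hs) ρ hρ
  obtain ⟨s, hs⟩ := this
  obtain ⟨Y0, hY0⟩ := s.exists_nat_subset_range
  refine ⟨Y0, fun Y hY X => ?_⟩
  have := hs (Finset.Ioc Y X) (by
    rw [Finset.disjoint_left]
    intro a ha has
    have := hY0 has
    simp at ha this; omega)
  exact (le_abs_self _).trans this.le

theorem zeta_ms {σ1 σ2 ρ : ℝ} (h1 : 1 / 2 < σ1) (h12 : σ1 ≤ σ2) (h2 : σ2 < 1) (hρ : 0 < ρ) :
    ∃ Y0 : ℕ, ∀ Y, Y0 ≤ Y → ∃ T0 : ℝ, ∀ T, T0 ≤ T → ∀ σ, σ1 ≤ σ → σ ≤ σ2 →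
    ∫ u in (-T)..T, ‖riemannZeta ((σ : ℂ) + u * I) - ∑ n ∈ Finset.Icc 1 Y, (n : ℂ) ^ (-((σ : ℂ) + u * I))‖ ^ 2 ≤ ρ * T := by
  set c := (2 : ℝ) ^ (1 - σ2) - 1 with hc
  have hc0 : 0 < c := by
    have := Real.one_lt_rpow (show (1 : ℝ) < 2 by norm_num) (show 0 < 1 - σ2 by linarith)
    linarith
  set δ := 2 * σ1 - 1 with hδ
  have hδ0 : 0 < δ := by linarith
  have hδ1 : δ < 1 := by linarith
  obtain ⟨Y0, hY0⟩ := tail_sum (p := 2 * σ1) (by linarith) (show 0 < ρ * c ^ 2 / 8 by positivity)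
  refine ⟨Y0, fun Y hY => ?_⟩
  obtain ⟨C, hC0, T1, hT1, hres⟩ := resid_choice (η := δ / 4) (by positivity) (by linarith)
  set Z := Zq (δ / 4) with hZ
  -- limit statement
  have hlim : Tendsto (fun T : ℝ => 40 * Z ^ 2 * T ^ (-(δ / 4)) + 4 * C ^ 2 * T ^ (-1 : ℝ)) atTop (nhds 0) := by
    have a := (tendsto_rpow_neg_atTop (show 0 < δ / 4 by positivity)).const_mul (40 * Z ^ 2)
    have b := (tendsto_rpow_neg_atTop (show (0 : ℝ) < 1 by positivity)).const_mul (4 * C ^ 2)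
    simpa using a.add b
  have hev := (hlim.eventually_lt_const (show 0 < ρ * c ^ 2 / 2 by positivity))
  obtain ⟨T2, hT2⟩ := eventually_atTop.mp hev
  refine ⟨max (max T1 T2) (2 * Y + 1), fun T hT σ hσ1 hσ2 => ?_⟩
  have hTT1 : T1 ≤ T := (le_max_left _ _).trans ((le_max_left _ _).trans hT)
  have hTT2 : T2 ≤ T := (le_max_right _ _).trans ((le_max_left _ _).trans hT)
  have hTY : 2 * (Y : ℝ) + 1 ≤ T := (le_max_right _ _).trans hT
  have hT1' : 1 ≤ T := by linarith
  have hT0 : 0 < T := by linarith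
  set W := T ^ (1 + δ / 4) with hW
  have hWT : T ≤ W := by
    calc T = T ^ (1 : ℝ) := (Real.rpow_one T).symm
      _ ≤ _ := Real.rpow_le_rpow_of_exponent_le hT1' (by linarith)
  set X := ⌈W⌉₊ with hX
  have hXW : W ≤ X := Nat.le_ceil W
  have hXY : 2 * Y ≤ X := by
    have : (2 * (Y : ℝ)) ≤ X := by linarith
    exact_mod_cast this
  have hX1 : 1 ≤ X := by
    have : (1 : ℝ) ≤ X := by linarith
    exact_mod_cast this
  have hX2 : (X : ℝ) ≤ 2 * W := by
    have := Nat.ceil_lt_add_one (show 0 ≤ W by linarith)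
    linarith
  have hpm := poly_ms h1 hσ1 (by linarith) (show 0 < δ / 4 by positivity) hT0.le Y X hX1 (ac Y) (ac_norm Y)
  have htail := hY0 Y hY X
  set P : ℝ → ℝ := fun u => ‖∑ n ∈ Finset.Ioc Y X, ac Y n * (n : ℂ) ^ (-((σ : ℂ) + u * I))‖ ^ 2 with hP
  have hPc : Continuous P := by
    refine (Continuous.norm (continuous_finsetSum _ (fun n hn => ?_))).pow 2
    rw [Finset.mem_Ioc] at hn
    exact continuous_const.mul (nat_cpow_cont n (by omega) σ)
  have hGc : Continuous (fun u : ℝ => ‖riemannZeta ((σ : ℂ) + u * I) - ∑ n ∈ Finset.Icc 1 Y, (n : ℂ) ^ (-((σ : ℂ) + u * I))‖ ^ 2) := by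
    refine (Continuous.norm ((zeta_line_cont (by linarith)).sub (continuous_finsetSum _ (fun n hn => ?_)))).pow 2
    rw [Finset.mem_Icc] at hn
    exact nat_cpow_cont n (by omega) σ
  have hpt : ∀ u ∈ Set.Icc (-T) T, ‖riemannZeta ((σ : ℂ) + u * I) - ∑ n ∈ Finset.Icc 1 Y, (n : ℂ) ^ (-((σ : ℂ) + u * I))‖ ^ 2
      ≤ (2 / c ^ 2) * P u + (2 / c ^ 2) * (C ^ 2 * T ^ (-1 : ℝ)) := by
    intro u hu
    set s : ℂ := (σ : ℂ) + u * I with hs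
    have hsre : s.re = σ := by simp [hs]
    have hsim : s.im = u := by simp [hs]
    have hsp := zeta_split (s := s) (by rw [hsre]; linarith) (by rw [hsre]; linarith) Y X hXY
    have hr := hres T hTT1 s (by rw [hsre]; linarith) (by rw [hsre]; linarith) (by rw [hsim, abs_le]; exact hu)
    have hf := factor_lower h2 (s := s) (by rw [hsre]; exact hσ2)
    set G := riemannZeta s - ∑ n ∈ Finset.Icc 1 Y, (n : ℂ) ^ (-s) with hG
    set Q := ∑ n ∈ Finset.Ioc Y X, ac Y n * (n : ℂ) ^ (-s) with hQ
    have hle : c * ‖G‖ ≤ ‖Q‖ + C * T ^ (-(1 / 2) : ℝ) := by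
      calc c * ‖G‖ ≤ ‖(1 : ℂ) - 2 ^ (1 - s)‖ * ‖G‖ := by gcongr
        _ = ‖Q + (-1) ^ X * ((Dk 0 s (X + 1 : ℕ) + Sk 1 s (X + 1)) / 2)‖ := by rw [← norm_mul, hsp]
        _ ≤ ‖Q‖ + ‖(Dk 0 s (X + 1 : ℕ) + Sk 1 s (X + 1)) / 2‖ := by
            refine (norm_add_le _ _).trans ?_
            rw [norm_mul, norm_pow, norm_neg, norm_one, one_pow, one_mul]
        _ ≤ _ := by gcongr
    have hsq : (c * ‖G‖) ^ 2 ≤ 2 * ‖Q‖ ^ 2 + 2 * (C * T ^ (-(1 / 2) : ℝ)) ^ 2 := by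
      have : (c * ‖G‖) ^ 2 ≤ (‖Q‖ + C * T ^ (-(1 / 2) : ℝ)) ^ 2 := by gcongr
      nlinarith [sq_nonneg (‖Q‖ - C * T ^ (-(1 / 2) : ℝ))]
    have e : (T ^ (-(1 / 2) : ℝ)) ^ 2 = T ^ (-1 : ℝ) := by
      rw [← Real.rpow_natCast, ← Real.rpow_mul hT0.le]; norm_num
    rw [mul_pow, mul_pow, e] at hsq
    have : ‖G‖ ^ 2 ≤ (2 * ‖Q‖ ^ 2 + 2 * (C ^ 2 * T ^ (-1 : ℝ))) / c ^ 2 := by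
      rw [le_div_iff₀ (by positivity)]; linarith
    refine this.trans (le_of_eq ?_)
    simp only [hP]
    rw [← hs, ← hQ]
    ring
  have hint : ∫ u in (-T)..T, ‖riemannZeta ((σ : ℂ) + u * I) - ∑ n ∈ Finset.Icc 1 Y, (n : ℂ) ^ (-((σ : ℂ) + u * I))‖ ^ 2
      ≤ ∫ u in (-T)..T, ((2 / c ^ 2) * P u + (2 / c ^ 2) * (C ^ 2 * T ^ (-1 : ℝ))) :=
    intervalIntegral.integral_mono_on (by linarith) (hGc.intervalIntegrable _ _)
      (by apply Continuous.intervalIntegrable; fun_prop) hpt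
  refine hint.trans ?_
  rw [intervalIntegral.integral_add ((hPc.intervalIntegrable _ _).const_mul _) (by simp),
    intervalIntegral.integral_const_mul, intervalIntegral.integral_const, smul_eq_mul]
  have hXe : (X : ℝ) ^ (1 + 2 * (δ / 4) - (2 * σ1 - 1)) ≤ 2 * (T * T ^ (-(δ / 4))) := by
    rw [← hδ]
    calc (X : ℝ) ^ (1 + 2 * (δ / 4) - δ) ≤ (2 * W) ^ (1 + 2 * (δ / 4) - δ) := by
          apply Real.rpow_le_rpow (by positivity) hX2; linarith
      _ = 2 ^ (1 + 2 * (δ / 4) - δ) * T ^ ((1 + δ / 4) * (1 + 2 * (δ / 4) - δ)) := by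
          rw [Real.mul_rpow (by norm_num) (by positivity), hW, ← Real.rpow_mul hT0.le]
      _ ≤ 2 ^ (1 : ℝ) * T ^ (1 + -(δ / 4)) := by
          gcongr
          · norm_num
          · linarith
          · nlinarith
      _ = _ := by rw [Real.rpow_add hT0, Real.rpow_one, Real.rpow_one]
  have hlt := hT2 T hTT2
  have hPle : ∫ u in (-T)..T, P u ≤ 2 * T * (ρ * c ^ 2 / 8) + 10 * Z ^ 2 * (2 * (T * T ^ (-(δ / 4)))) := by
    refine hpm.trans ?_
    gcongr
  have key : 2 * (2 * T * (ρ * c ^ 2 / 8) + 10 * Z ^ 2 * (2 * (T * T ^ (-(δ / 4))))) + 4 * T * (C ^ 2 * T ^ (-1 : ℝ)) ≤ ρ * T * c ^ 2 := by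
    have := mul_le_mul_of_nonneg_left hlt.le hT0.le
    nlinarith
  calc _ = (2 * (∫ u in (-T)..T, P u) + 4 * T * (C ^ 2 * T ^ (-1 : ℝ))) / c ^ 2 := by ring
    _ ≤ (2 * (2 * T * (ρ * c ^ 2 / 8) + 10 * Z ^ 2 * (2 * (T * T ^ (-(δ / 4))))) + 4 * T * (C ^ 2 * T ^ (-1 : ℝ))) / c ^ 2 := by gcongr
    _ ≤ _ := by rw [div_le_iff₀ (by positivity)]; exact key


open Classical in
/-- Trigonometric polynomials with nonnegative coefficients, frequencies `α log a`, constant term at least `κ`. -/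
def TP (α κ : ℝ) (F : ℝ → ℝ) : Prop :=
  ∃ (J : Finset ℚ) (c : ℚ → ℝ), (∀ a ∈ J, 0 < a) ∧ (∀ a, 0 ≤ c a) ∧ (1 ∈ J ∧ κ ≤ c 1) ∧
    ∀ τ : ℝ, (F τ : ℂ) = ∑ a ∈ J, (c a : ℂ) * cexp (I * ((α * Real.log a : ℝ) : ℂ) * τ)

lemma TP.of_index {α κ : ℝ} {F : ℝ → ℝ} {ι : Type} (S : Finset ι) (c : ι → ℝ) (a : ι → ℚ)
    (ha : ∀ i, 0 < a i) (hc : ∀ i, 0 ≤ c i) (i0 : ι) (hi0 : i0 ∈ S) (h1 : a i0 = 1) (hκ : κ ≤ c i0)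
    (hF : ∀ τ : ℝ, (F τ : ℂ) = ∑ i ∈ S, (c i : ℂ) * cexp (I * ((α * Real.log (a i) : ℝ) : ℂ) * τ)) : TP α κ F := by
  classical
  refine ⟨S.image a, fun x => ∑ i ∈ S with a i = x, c i, ?_, ?_, ⟨?_, ?_⟩, ?_⟩
  · intro x hx
    rw [Finset.mem_image] at hx
    obtain ⟨i, _, rfl⟩ := hx
    exact ha i
  · exact fun x => Finset.sum_nonneg (fun i _ => hc i)
  · rw [← h1]; exact Finset.mem_image_of_mem _ hi0
  · refine hκ.trans ?_
    exact Finset.single_le_sum (f := c) (fun i _ => hc i) (by simp [hi0, h1])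
  · intro τ
    rw [hF, ← Finset.sum_fiberwise_of_maps_to (g := a) (t := S.image a) (fun i hi => Finset.mem_image_of_mem _ hi)]
    refine Finset.sum_congr rfl (fun x _ => ?_)
    push_cast
    rw [Finset.sum_mul]
    refine Finset.sum_congr rfl (fun i hi => ?_)
    rw [(Finset.mem_filter.mp hi).2]

lemma TP.mul {α κ κ' : ℝ} {F G : ℝ → ℝ} (hκ' : 0 ≤ κ') (hF : TP α κ F) (hG : TP α κ' G) :
    TP α (κ * κ') (fun τ => F τ * G τ) := by
  classical
  obtain ⟨J, c, hJ, hc, ⟨h1, hk⟩, hF⟩ := hF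
  obtain ⟨J', c', hJ', hc', ⟨h1', hk'⟩, hG⟩ := hG
  refine TP.of_index (ι := J × J') Finset.univ (fun i => c i.1 * c' i.2) (fun i => i.1.1 * i.2.1) ?_ ?_
    (⟨1, h1⟩, ⟨1, h1'⟩) (Finset.mem_univ _) (by simp) ?_ ?_
  · intro i; exact mul_pos (hJ _ i.1.2) (hJ' _ i.2.2)
  · intro i; exact mul_nonneg (hc _) (hc' _)
  · exact mul_le_mul hk hk' hκ' (hc _)
  · intro τ
    rw [Complex.ofReal_mul, hF, hG, ← Finset.sum_coe_sort J, ← Finset.sum_coe_sort J', Finset.sum_mul_sum,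
      ← Finset.univ_product_univ, Finset.sum_product]
    refine Finset.sum_congr rfl (fun i _ => Finset.sum_congr rfl (fun j _ => ?_))
    have h1 : ((i.1 : ℚ) : ℝ) ≠ 0 := by exact_mod_cast (hJ _ i.2).ne'
    have h2 : ((j.1 : ℚ) : ℝ) ≠ 0 := by exact_mod_cast (hJ' _ j.2).ne'
    push_cast
    rw [show cexp (I * (α * ((Real.log (i.1 * j.1) : ℝ) : ℂ)) * τ) = cexp (I * (α * ((Real.log i.1 : ℝ) : ℂ)) * τ) *
      cexp (I * (α * ((Real.log j.1 : ℝ) : ℂ)) * τ) by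
        rw [← Complex.exp_add, Real.log_mul h1 h2]; push_cast; ring_nf]
    ring

lemma TP.one (α : ℝ) : TP α 1 (fun _ => 1) := by
  refine ⟨{1}, fun _ => 1, by simp, by simp, by simp, by simp⟩

noncomputable def wf (α : ℝ) (M n : ℕ) (τ : ℝ) : ℝ := ((1 + Real.cos (α * Real.log n * τ)) / 2) ^ M

lemma wf_TP (α : ℝ) (M n : ℕ) (hM : 1 ≤ M) (hn : 1 ≤ n) : TP α (1 / (2 * M)) (wf α M n) := by
  have hnq : (0 : ℚ) < n := by exact_mod_cast hn
  have hM0 : (0 : ℝ) < M := by exact_mod_cast hM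
  refine TP.of_index (ι := ℕ) (Finset.range (2 * M + 1)) (fun j => ((2 * M).choose j : ℝ) / 4 ^ M)
    (fun j => (n : ℚ) ^ ((j : ℤ) - M)) ?_ ?_ M (by simp; omega) (by simp) ?_ ?_
  · intro j; positivity
  · intro j; positivity
  · have h := Nat.four_pow_le_two_mul_self_mul_centralBinom M hM
    rw [Nat.centralBinom_eq_two_mul_choose] at h
    have h' : (4 : ℝ) ^ M ≤ 2 * M * ((2 * M).choose M) := by exact_mod_cast h
    rw [div_le_div_iff₀ (by positivity) (by positivity)]
    linarith
  · intro τ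
    set θ : ℂ := I * ((α * Real.log n : ℝ) : ℂ) * τ with hθ
    have hcos : ((1 + Real.cos (α * Real.log n * τ) : ℝ) : ℂ) / 2 = cexp (-θ) * (cexp θ + 1) ^ 2 / 4 := by
      push_cast
      rw [Complex.cos]
      have e1 : (α : ℂ) * ((Real.log n : ℝ) : ℂ) * τ * I = θ := by rw [hθ]; push_cast; ring
      have e2 : -((α : ℂ) * ((Real.log n : ℝ) : ℂ) * τ) * I = -θ := by rw [hθ]; push_cast; ring
      rw [Complex.natCast_log] at e1 e2
      rw [e1, e2]
      have : cexp (-θ) * cexp θ = 1 := by rw [← Complex.exp_add]; simp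
      linear_combination (-(cexp θ + 2) / 4) * this
    rw [wf]
    push_cast at hcos ⊢
    rw [hcos, div_pow, mul_pow, ← pow_mul, add_pow, Finset.mul_sum, Finset.sum_div]
    refine Finset.sum_congr rfl (fun j _ => ?_)
    rw [Real.log_zpow]
    have : cexp (I * (α * (((((j : ℤ) - M : ℤ) : ℝ) * Real.log n : ℝ) : ℂ)) * τ) = cexp (-θ) ^ M * cexp θ ^ j := by
      rw [← Complex.exp_nat_mul, ← Complex.exp_nat_mul, ← Complex.exp_add, hθ]
      push_cast; congr 1; ring
    rw [this]
    simp
    ring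

noncomputable def wF (α : ℝ) (M N : ℕ) (τ : ℝ) : ℝ := ∏ n ∈ Finset.Icc 1 N, wf α M n τ

lemma wF_TP (α : ℝ) (M N : ℕ) (hM : 1 ≤ M) : TP α ((1 / (2 * M)) ^ N) (wF α M N) := by
  induction N with
  | zero =>
    have : wF α M 0 = fun _ => 1 := by funext τ; simp [wF]
    rw [this, pow_zero]
    exact TP.one α
  | succ N ih =>
    have : wF α M (N + 1) = fun τ => wF α M N τ * wf α M (N + 1) τ := by
      funext τ; rw [wF, Finset.prod_Icc_succ_top (by omega)]; rfl
    rw [this, pow_succ]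
    exact ih.mul (by positivity) (wf_TP α M (N + 1) hM (by omega))

lemma wf_nonneg (α : ℝ) (M n : ℕ) (τ : ℝ) : 0 ≤ wf α M n τ := by
  have := Real.neg_one_le_cos (α * Real.log n * τ)
  unfold wf; apply pow_nonneg; linarith

lemma wf_le_one (α : ℝ) (M n : ℕ) (τ : ℝ) : wf α M n τ ≤ 1 := by
  have := Real.neg_one_le_cos (α * Real.log n * τ)
  have := Real.cos_le_one (α * Real.log n * τ)
  unfold wf; apply pow_le_one₀ <;> linarith

lemma wF_nonneg (α : ℝ) (M N : ℕ) (τ : ℝ) : 0 ≤ wF α M N τ := Finset.prod_nonneg (fun n _ => wf_nonneg α M n τ)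

lemma wF_le_one (α : ℝ) (M N : ℕ) (τ : ℝ) : wF α M N τ ≤ 1 :=
  Finset.prod_le_one (fun n _ => wf_nonneg α M n τ) (fun n _ => wf_le_one α M n τ)

lemma wF_cont (α : ℝ) (M N : ℕ) : Continuous (wF α M N) := by
  unfold wF wf; fun_prop

lemma wF_small (α : ℝ) (M N n : ℕ) (hn : n ∈ Finset.Icc 1 N) (τ δ : ℝ) (hδ : 0 ≤ δ)
    (h : δ ≤ ‖cexp (I * ((α * Real.log n : ℝ) : ℂ) * τ) - 1‖) : wF α M N τ ≤ (1 - δ ^ 2 / 4) ^ M := by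
  have h1 : wF α M N τ ≤ wf α M n τ := by
    unfold wF
    rw [← Finset.mul_prod_erase _ _ hn]
    refine mul_le_of_le_one_right (wf_nonneg α M n τ) ?_
    exact Finset.prod_le_one (fun n _ => wf_nonneg α M n τ) (fun n _ => wf_le_one α M n τ)
  refine h1.trans ?_
  have hc := Real.neg_one_le_cos (α * Real.log n * τ)
  unfold wf
  refine pow_le_pow_left₀ (by linarith) ?_ M
  have h2 : ‖cexp (I * ((α * Real.log n : ℝ) : ℂ) * τ) - 1‖ ^ 2 = 2 - 2 * Real.cos (α * Real.log n * τ) := by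
    rw [show I * ((α * Real.log n : ℝ) : ℂ) * τ = ((α * Real.log n * τ : ℝ) : ℂ) * I by push_cast; ring]
    rw [← Complex.normSq_eq_norm_sq, Complex.normSq_apply]
    rw [Complex.sub_re, Complex.sub_im, Complex.exp_ofReal_mul_I_re, Complex.exp_ofReal_mul_I_im]
    simp
    nlinarith [Real.sin_sq_add_cos_sq (α * Real.log n * τ)]
  have h3 : δ ^ 2 ≤ 2 - 2 * Real.cos (α * Real.log n * τ) := by rw [← h2]; gcongr
  linarith

lemma int_exp_mean (l : ℝ) (hl : l ≠ 0) : ∀ ρ > 0, ∃ T0 : ℝ, 0 < T0 ∧ ∀ T, T0 ≤ T → ‖∫ u in (0:ℝ)..T, cexp (I * (l : ℂ) * u)‖ ≤ ρ * T := by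
  intro ρ hρ
  have : 0 < |l| := abs_pos.mpr hl
  refine ⟨2 / |l| / ρ, by positivity, fun T hT => (int_exp_bound hl 0 T).trans ?_⟩
  rw [div_le_iff₀ hρ] at hT
  linarith

lemma TP.integral {α κ : ℝ} {F : ℝ → ℝ} (hF : TP α κ F) : ∃ (J : Finset ℚ) (c : ℚ → ℝ), (∀ a ∈ J, 0 < a) ∧ (∀ a, 0 ≤ c a) ∧ (1 ∈ J ∧ κ ≤ c 1) ∧
    ∀ (l T : ℝ), ∫ u in (0:ℝ)..T, (F u : ℂ) * cexp (I * (l : ℂ) * u) =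
      ∑ a ∈ J, (c a : ℂ) * ∫ u in (0:ℝ)..T, cexp (I * ((α * Real.log a + l : ℝ) : ℂ) * u) := by
  obtain ⟨J, c, hJ, hc, h1, hF⟩ := hF
  refine ⟨J, c, hJ, hc, h1, fun l T => ?_⟩
  have : ∀ u : ℝ, (F u : ℂ) * cexp (I * (l : ℂ) * u) = ∑ a ∈ J, (c a : ℂ) * cexp (I * ((α * Real.log a + l : ℝ) : ℂ) * u) := by
    intro u
    rw [hF, Finset.sum_mul]
    refine Finset.sum_congr rfl (fun a _ => ?_)
    rw [mul_assoc, ← Complex.exp_add]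
    push_cast; ring_nf
  simp only [this]
  rw [intervalIntegral.integral_finsetSum]
  · simp only [intervalIntegral.integral_const_mul]
  · intro a _
    apply Continuous.intervalIntegrable; fun_prop

lemma sum_small {ι : Type} (J : Finset ι) (c : ι → ℝ) (hc : ∀ a, 0 ≤ c a) (f : ι → ℝ → ℂ)
    (hf : ∀ a ∈ J, ∀ ρ > 0, ∃ T0 : ℝ, 0 < T0 ∧ ∀ T, T0 ≤ T → ‖f a T‖ ≤ ρ * T) (ρ : ℝ) (hρ : 0 < ρ) :
    ∃ T0 : ℝ, 0 < T0 ∧ ∀ T, T0 ≤ T → ‖∑ a ∈ J, (c a : ℂ) * f a T‖ ≤ ρ * T := by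
  set S := ∑ a ∈ J, c a with hS
  have hS0 : 0 ≤ S := Finset.sum_nonneg (fun a _ => hc a)
  have h : ∀ a ∈ J, ∀ᶠ T in (atTop : Filter ℝ), ‖f a T‖ ≤ ρ / (S + 1) * T := fun a ha => by
    obtain ⟨T0, _, h⟩ := hf a ha (ρ / (S + 1)) (by positivity)
    exact eventually_atTop.mpr ⟨T0, h⟩
  have h' := (Filter.eventually_all_finset J).mpr h
  obtain ⟨T0, hT0⟩ := eventually_atTop.mp h'
  refine ⟨max T0 1, by positivity, fun T hT => ?_⟩
  have hT1 : 1 ≤ T := (le_max_right _ _).trans hT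
  refine (norm_sum_le _ _).trans ?_
  calc _ ≤ ∑ a ∈ J, c a * (ρ / (S + 1) * T) := by
        refine Finset.sum_le_sum (fun a ha => ?_)
        rw [norm_mul, Complex.norm_real, Real.norm_of_nonneg (hc a)]
        exact mul_le_mul_of_nonneg_left (hT0 T ((le_max_left _ _).trans hT) a ha) (hc a)
    _ = S * (ρ / (S + 1)) * T := by rw [← Finset.sum_mul, mul_assoc]
    _ ≤ ρ * T := by
        have : S * (ρ / (S + 1)) ≤ ρ := by rw [← mul_div_assoc, div_le_iff₀ (by positivity)]; nlinarith
        gcongr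

lemma TP.nonres {α κ : ℝ} {F : ℝ → ℝ} (hF : TP α κ F) {l : ℝ} (hl : ∀ a : ℚ, 0 < a → α * Real.log a + l ≠ 0)
    (ρ : ℝ) (hρ : 0 < ρ) : ∃ T0 : ℝ, 0 < T0 ∧ ∀ T, T0 ≤ T → ‖∫ u in (0:ℝ)..T, (F u : ℂ) * cexp (I * (l : ℂ) * u)‖ ≤ ρ * T := by
  obtain ⟨J, c, hJ, hc, h1, hF⟩ := hF.integral
  simp only [hF]
  exact sum_small J c hc _ (fun a ha => int_exp_mean _ (hl a (hJ a ha))) ρ hρ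

lemma TP.mean {α κ : ℝ} (hα : α ≠ 0) {F : ℝ → ℝ} (hF : TP α κ F) (ρ : ℝ) (hρ : 0 < ρ) :
    ∃ T0 : ℝ, 0 < T0 ∧ ∀ T, T0 ≤ T → (κ - ρ) * T ≤ ∫ u in (0:ℝ)..T, F u := by
  obtain ⟨J, c, hJ, hc, ⟨h1, hk⟩, hF⟩ := hF.integral
  obtain ⟨T0, hT0, h⟩ := sum_small (J.erase 1) c hc (fun a T => ∫ u in (0:ℝ)..T, cexp (I * ((α * Real.log a + 0 : ℝ) : ℂ) * u)) (by
    intro a ha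
    rw [Finset.mem_erase] at ha
    apply int_exp_mean
    rw [add_zero]
    refine mul_ne_zero hα (Real.log_ne_zero_of_pos_of_ne_one ?_ ?_)
    · exact_mod_cast hJ a ha.2
    · exact_mod_cast ha.1) ρ hρ
  refine ⟨T0, hT0, fun T hT => ?_⟩
  have hTp : 0 < T := by linarith
  have h2 := hF 0 T
  rw [← Finset.add_sum_erase _ _ h1] at h2
  simp only [Complex.ofReal_zero, mul_zero, zero_mul, Complex.exp_zero, mul_one, intervalIntegral.integral_ofReal,
    Rat.cast_one, Real.log_one, add_zero, intervalIntegral.integral_const, sub_zero] at h2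
  have h3 := h T hT
  simp only [add_zero] at h3
  have h4 : ∑ a ∈ J.erase 1, (c a : ℂ) * ∫ u in (0:ℝ)..T, cexp (I * ((α * Real.log a : ℝ) : ℂ) * u) =
      (((∫ u in (0:ℝ)..T, F u) - c 1 * T : ℝ) : ℂ) := by
    push_cast
    rw [h2]
    simp
  rw [h4, Complex.norm_real, Real.norm_eq_abs, abs_le] at h3
  nlinarith [h3.1]


noncomputable def GN (N : ℕ) (s : ℂ) : ℂ := riemannZeta s - ∑ n ∈ Finset.Icc 1 N, (n : ℂ) ^ (-s)

lemma cpow_shift {n : ℕ} (hn : 1 ≤ n) (z : ℂ) (β τ : ℝ) :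
    (n : ℂ) ^ (-(z + ((β * τ : ℝ) : ℂ) * I)) = (n : ℂ) ^ (-z) * cexp (I * ((-β * Real.log n : ℝ) : ℂ) * τ) := by
  have h0 : (n : ℂ) ≠ 0 := by exact_mod_cast (by omega : n ≠ 0)
  rw [neg_add, Complex.cpow_add _ _ h0]
  congr 1
  rw [Complex.cpow_def_of_ne_zero h0]
  congr 1
  rw [Complex.natCast_log.symm]
  push_cast; ring

lemma norm_nat_cpow {n : ℕ} (hn : 1 ≤ n) (z : ℂ) : ‖(n : ℂ) ^ (-z)‖ = (n : ℝ) ^ (-z.re) := by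
  rw [Complex.norm_natCast_cpow_of_pos (by omega)]; simp

lemma int_F_exp_le {F : ℝ → ℝ} (hF0 : ∀ t, 0 ≤ F t) (l : ℝ) {T : ℝ} (hT : 0 ≤ T) :
    ‖∫ u in (0:ℝ)..T, (F u : ℂ) * cexp (I * (l : ℂ) * u)‖ ≤ ∫ u in (0:ℝ)..T, F u := by
  refine (intervalIntegral.norm_integral_le_integral_norm hT).trans (le_of_eq ?_)
  refine intervalIntegral.integral_congr (fun u _ => ?_)
  simp only [norm_mul, Complex.norm_real, Real.norm_of_nonneg (hF0 u)]
  rw [show I * (l : ℂ) * u = ((l * u : ℝ) : ℂ) * I by push_cast; ring, Complex.norm_exp_ofReal_mul_I, mul_one]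

lemma main_poly {α β : ℝ} (hα : α ≠ 0) (hirr : Irrational (β / α)) {σ1 ρ : ℝ} (h1 : 1 / 2 < σ1) (hρ : 0 < ρ) :
    ∃ N0 : ℕ, ∀ N, N0 ≤ N → ∀ (κ : ℝ) (F : ℝ → ℝ), TP α κ F → (∀ t, 0 ≤ F t) → Continuous F →
    ∀ (Y : ℕ) (ρ2 : ℝ), 0 < ρ2 → ∃ T0 : ℝ, ∀ T, T0 ≤ T → ∀ z : ℂ, σ1 ≤ z.re →
    ∫ t in (0:ℝ)..T, F t * ‖∑ n ∈ Finset.Ioc N Y, (n : ℂ) ^ (-(z + ((β * t : ℝ) : ℂ) * I))‖ ^ 2 ≤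
      ρ * (∫ t in (0:ℝ)..T, F t) + ρ2 * T := by
  classical
  obtain ⟨N0, hN0⟩ := tail_BB hirr h1 hρ
  refine ⟨N0, fun N hN κ F hTP hF0 hFc Y ρ2 hρ2 => ?_⟩
  have htail := hN0 N hN Y
  set S := Finset.Ioc N Y with hS
  have hev : ∀ m ∈ S, ∀ n ∈ S, ∀ᶠ T in (atTop : Filter ℝ), ¬ BB (β / α) ((m : ℚ) / n) →
      ‖∫ u in (0:ℝ)..T, (F u : ℂ) * cexp (I * ((-β * Real.log m - -β * Real.log n : ℝ) : ℂ) * u)‖ ≤ (ρ2 / ((Y : ℝ) + 1) ^ 2) * T := by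
    intro m hm n hn
    by_cases hb : BB (β / α) ((m : ℚ) / n)
    · exact Eventually.of_forall (fun T h => absurd hb h)
    rw [hS, Finset.mem_Ioc] at hm hn
    have hm0 : (0 : ℝ) < m := by exact_mod_cast (by omega : 0 < m)
    have hn0 : (0 : ℝ) < n := by exact_mod_cast (by omega : 0 < n)
    obtain ⟨T0, _, hT0⟩ := hTP.nonres (l := -β * Real.log m - -β * Real.log n) (by
      intro a ha h0
      apply hb
      refine ⟨div_pos (by exact_mod_cast hm0) (by exact_mod_cast hn0), a, ha, ?_⟩
      push_cast
      rw [Real.log_div hm0.ne' hn0.ne']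
      field_simp
      linarith) (ρ2 / ((Y : ℝ) + 1) ^ 2) (by positivity)
    exact eventually_atTop.mpr ⟨T0, fun T hT _ => hT0 T hT⟩
  have hev' := (Filter.eventually_all_finset S).mpr (fun m hm => (Filter.eventually_all_finset S).mpr (hev m hm))
  obtain ⟨T0, hT0⟩ := eventually_atTop.mp hev'
  refine ⟨max T0 0, fun T hT z hz => ?_⟩
  have hTn : 0 ≤ T := (le_max_right _ _).trans hT
  have hTT := hT0 T ((le_max_left _ _).trans hT)
  have hFn : 0 ≤ ∫ t in (0:ℝ)..T, F t := intervalIntegral.integral_nonneg hTn (fun t _ => hF0 t)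
  have hg := ms_general S (fun n => (n : ℂ) ^ (-z)) (fun n => -β * Real.log n) F hFc 0 T
  have hL : ∫ t in (0:ℝ)..T, F t * ‖∑ n ∈ S, (n : ℂ) ^ (-(z + ((β * t : ℝ) : ℂ) * I))‖ ^ 2 =
      ∫ u in (0:ℝ)..T, F u * ‖∑ n ∈ S, (n : ℂ) ^ (-z) * cexp (I * ((-β * Real.log n : ℝ) : ℂ) * u)‖ ^ 2 := by
    refine intervalIntegral.integral_congr (fun u _ => ?_)
    congr 3
    refine Finset.sum_congr rfl (fun n hn => ?_)
    rw [hS, Finset.mem_Ioc] at hn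
    exact cpow_shift (by omega) z β u
  rw [hL]
  refine hg.trans ?_
  have hterm : ∀ m ∈ S, ∀ n ∈ S, ‖(m : ℂ) ^ (-z)‖ * ‖(n : ℂ) ^ (-z)‖ *
      ‖∫ u in (0:ℝ)..T, (F u : ℂ) * cexp (I * ((-β * Real.log m - -β * Real.log n : ℝ) : ℂ) * u)‖ ≤
      (if BB (β / α) ((m : ℚ) / n) then ((m : ℝ) * n) ^ (-σ1) else 0) * (∫ t in (0:ℝ)..T, F t) + (ρ2 / ((Y : ℝ) + 1) ^ 2) * T := by
    intro m hm n hn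
    have hm' := hm; have hn' := hn
    rw [hS, Finset.mem_Ioc] at hm' hn'
    have hm1 : (1 : ℝ) ≤ m := by exact_mod_cast (by omega : 1 ≤ m)
    have hn1 : (1 : ℝ) ≤ n := by exact_mod_cast (by omega : 1 ≤ n)
    rw [norm_nat_cpow (by omega), norm_nat_cpow (by omega)]
    have e1 : (m : ℝ) ^ (-z.re) * (n : ℝ) ^ (-z.re) ≤ ((m : ℝ) * n) ^ (-σ1) := by
      rw [← Real.mul_rpow (by positivity) (by positivity)]
      exact Real.rpow_le_rpow_of_exponent_le (by nlinarith) (by linarith)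
    have e2 : ((m : ℝ) * n) ^ (-σ1) ≤ 1 := Real.rpow_le_one_of_one_le_of_nonpos (by nlinarith) (by linarith)
    split_ifs with hb
    · have := int_F_exp_le hF0 (-β * Real.log m - -β * Real.log n) hTn
      have h3 : 0 ≤ (ρ2 / ((Y : ℝ) + 1) ^ 2) * T := by positivity
      calc _ ≤ ((m : ℝ) * n) ^ (-σ1) * (∫ t in (0:ℝ)..T, F t) := by gcongr
        _ ≤ _ := by linarith
    · have := hTT m hm n hn hb
      rw [zero_mul, zero_add]
      calc _ ≤ 1 * ((ρ2 / ((Y : ℝ) + 1) ^ 2) * T) := by gcongr; exact e1.trans e2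
        _ = _ := one_mul _
  refine (Finset.sum_le_sum (fun m hm => Finset.sum_le_sum (fun n hn => hterm m hm n hn))).trans ?_
  simp only [Finset.sum_add_distrib, ← Finset.sum_mul, Finset.sum_const, smul_eq_mul, nsmul_eq_mul]
  refine add_le_add ?_ ?_
  · refine mul_le_mul_of_nonneg_right ?_ hFn
    convert htail
  · have hcard : (S.card : ℝ) ≤ (Y : ℝ) + 1 := by
      have : S.card ≤ Y + 1 := by rw [hS, Nat.card_Ioc]; omega
      exact_mod_cast this
    calc _ = ((S.card : ℝ) * S.card) * ((ρ2 / ((Y : ℝ) + 1) ^ 2) * T) := by ring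
      _ ≤ (((Y : ℝ) + 1) * ((Y : ℝ) + 1)) * ((ρ2 / ((Y : ℝ) + 1) ^ 2) * T) := by gcongr
      _ = _ := by field_simp

lemma GN_cont (N : ℕ) : ContinuousOn (GN N) {s : ℂ | s.re < 1} := by
  intro s hs
  have hs1 : s ≠ 1 := fun h => by rw [h] at hs; simp at hs
  refine ContinuousAt.continuousWithinAt ?_
  unfold GN
  refine (differentiableAt_riemannZeta hs1).continuousAt.sub ?_
  refine tendsto_finsetSum _ (fun n hn => ?_)
  rw [Finset.mem_Icc] at hn
  have : (n : ℂ) ≠ 0 := by exact_mod_cast (by omega : n ≠ 0)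
  exact (continuous_neg.const_cpow (Or.inl this)).continuousAt

lemma GN_diff (N : ℕ) : DifferentiableOn ℂ (GN N) {s : ℂ | s.re < 1} := by
  intro s hs
  have hs1 : s ≠ 1 := fun h => by rw [h] at hs; simp at hs
  refine DifferentiableAt.differentiableWithinAt ?_
  unfold GN
  refine (differentiableAt_riemannZeta hs1).sub (DifferentiableAt.fun_sum (fun n hn => ?_))
  rw [Finset.mem_Icc] at hn
  have : (n : ℂ) ≠ 0 := by exact_mod_cast (by omega : n ≠ 0)
  exact differentiableAt_id.neg.const_cpow (Or.inl this)

lemma GN_shift_cont (N : ℕ) {z : ℂ} (hz : z.re < 1) (β : ℝ) : Continuous (fun t : ℝ => GN N (z + ((β * t : ℝ) : ℂ) * I)) := by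
  refine (GN_cont N).comp_continuous (by fun_prop) (fun t => ?_)
  simpa using hz

lemma rest_ms {β σ1 σ2 ρ B : ℝ} (hβ : β ≠ 0) (h1 : 1 / 2 < σ1) (h12 : σ1 ≤ σ2) (h2 : σ2 < 1) (hρ : 0 < ρ) :
    ∃ Y0 : ℕ, ∀ Y, Y0 ≤ Y → ∃ T0 : ℝ, ∀ T, T0 ≤ T → ∀ z : ℂ, σ1 ≤ z.re → z.re ≤ σ2 → |z.im| ≤ B →
    ∫ t in (0:ℝ)..T, ‖GN Y (z + ((β * t : ℝ) : ℂ) * I)‖ ^ 2 ≤ ρ * T := by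
  obtain ⟨Y0, hY0⟩ := zeta_ms h1 h12 h2 (show 0 < ρ / 2 by positivity)
  refine ⟨Y0, fun Y hY => ?_⟩
  obtain ⟨T0, hT0⟩ := hY0 Y hY
  have hβ0 : 0 < |β| := abs_pos.mpr hβ
  refine ⟨max 0 (max (T0 / |β|) (B / |β|)), fun T hT z hz1 hz2 hzB => ?_⟩
  have hTn : 0 ≤ T := (le_max_left _ _).trans hT
  have hTT0 : T0 ≤ T * |β| := by
    rw [← div_le_iff₀ hβ0]; exact (le_max_left _ _).trans ((le_max_right _ _).trans hT)
  have hTB : B ≤ T * |β| := by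
    rw [← div_le_iff₀ hβ0]; exact (le_max_right _ _).trans ((le_max_right _ _).trans hT)
  have hB0 : 0 ≤ B := (abs_nonneg _).trans hzB
  have hz := hT0 (T * |β| + B) (by linarith) z.re hz1 hz2
  set g : ℝ → ℝ := fun u => ‖riemannZeta ((z.re : ℂ) + u * I) - ∑ n ∈ Finset.Icc 1 Y, (n : ℂ) ^ (-((z.re : ℂ) + u * I))‖ ^ 2 with hg
  have hgc : Continuous g := by
    have := ((GN_shift_cont Y (z := (z.re : ℂ)) (by simp; linarith) 1).norm).pow 2
    simp only [one_mul, GN] at this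
    exact this
  have hg0 : ∀ u, 0 ≤ g u := fun u => by positivity
  have e : ∫ t in (0:ℝ)..T, ‖GN Y (z + ((β * t : ℝ) : ℂ) * I)‖ ^ 2 = ∫ t in (0:ℝ)..T, g (β * t + z.im) := by
    refine intervalIntegral.integral_congr (fun t _ => ?_)
    have : z + ((β * t : ℝ) : ℂ) * I = (z.re : ℂ) + ((β * t + z.im : ℝ) : ℂ) * I := by
      conv_lhs => rw [← Complex.re_add_im z]
      push_cast; ring
    simp only [hg, GN]
    rw [this]
  rw [e, intervalIntegral.integral_comp_mul_add g hβ, smul_eq_mul]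
  have hzi := abs_le.mp hzB
  have hb1 : |β * 0 + z.im| ≤ T * |β| + B := by
    rw [mul_zero, zero_add]; nlinarith
  have hb2 : |β * T + z.im| ≤ T * |β| + B := by
    refine (abs_add_le _ _).trans ?_
    rw [abs_mul, abs_of_nonneg hTn]; nlinarith
  have hI : |∫ u in (β * 0 + z.im)..(β * T + z.im), g u| ≤ ∫ u in (-(T * |β| + B))..(T * |β| + B), g u := by
    rw [abs_le] at hb1 hb2
    have hsub : ∀ a b : ℝ, -(T * |β| + B) ≤ a → a ≤ b → b ≤ T * |β| + B →
        |∫ u in a..b, g u| ≤ ∫ u in (-(T * |β| + B))..(T * |β| + B), g u := by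
      intro a b ha hab hb
      rw [abs_of_nonneg (intervalIntegral.integral_nonneg hab (fun u _ => hg0 u))]
      exact intervalIntegral.integral_mono_interval ha hab hb (Eventually.of_forall hg0) (hgc.intervalIntegrable _ _)
    rcases le_total (β * 0 + z.im) (β * T + z.im) with h | h
    · exact hsub _ _ hb1.1 h hb2.2
    · rw [intervalIntegral.integral_symm, abs_neg]
      exact hsub _ _ hb2.1 h hb1.2
  calc _ ≤ |β⁻¹ * ∫ u in (β * 0 + z.im)..(β * T + z.im), g u| := le_abs_self _
    _ = |β|⁻¹ * |∫ u in (β * 0 + z.im)..(β * T + z.im), g u| := by rw [abs_mul, abs_inv]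
    _ ≤ |β|⁻¹ * (ρ / 2 * (T * |β| + B)) := by gcongr; exact hI.trans hz
    _ ≤ |β|⁻¹ * (ρ / 2 * (2 * (T * |β|))) := by gcongr; linarith
    _ = ρ * T := by field_simp

lemma main_ms {α β : ℝ} (hα : α ≠ 0) (hβ : β ≠ 0) (hirr : Irrational (β / α)) {σ1 σ2 ρ : ℝ} (B : ℝ) (h1 : 1 / 2 < σ1)
    (h12 : σ1 ≤ σ2) (h2 : σ2 < 1) (hρ : 0 < ρ) :
    ∃ N0 : ℕ, ∀ N, N0 ≤ N → ∀ (κ : ℝ) (F : ℝ → ℝ), TP α κ F → (∀ t, 0 ≤ F t) → (∀ t, F t ≤ 1) → Continuous F →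
    ∀ (ρ2 : ℝ), 0 < ρ2 → ∃ T0 : ℝ, ∀ T, T0 ≤ T → ∀ z : ℂ, σ1 ≤ z.re → z.re ≤ σ2 → |z.im| ≤ B →
    ∫ t in (0:ℝ)..T, F t * ‖GN N (z + ((β * t : ℝ) : ℂ) * I)‖ ^ 2 ≤
      ρ * (∫ t in (0:ℝ)..T, F t) + ρ2 * T := by
  obtain ⟨N0, hN0⟩ := main_poly (α := α) (β := β) hα hirr h1 (show 0 < ρ / 2 by positivity)
  refine ⟨N0, fun N hN κ F hTP hF0 hF1 hFc ρ2 hρ2 => ?_⟩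
  obtain ⟨Y0, hY0⟩ := rest_ms (B := B) hβ h1 h12 h2 (show 0 < ρ2 / 4 by positivity)
  set Y := max Y0 N with hY
  obtain ⟨T1, hT1⟩ := hY0 Y (le_max_left _ _)
  obtain ⟨T2, hT2⟩ := hN0 N hN κ F hTP hF0 hFc Y (ρ2 / 4) (by positivity)
  refine ⟨max 0 (max T1 T2), fun T hT z hz1 hz2 hzB => ?_⟩
  have hTn : 0 ≤ T := (le_max_left _ _).trans hT
  have ha := hT1 T ((le_max_left _ _).trans ((le_max_right _ _).trans hT)) z hz1 hz2 hzB
  have hb := hT2 T ((le_max_right _ _).trans ((le_max_right _ _).trans hT)) z hz1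
  have hPc : Continuous (fun t : ℝ => ∑ n ∈ Finset.Ioc N Y, (n : ℂ) ^ (-(z + ((β * t : ℝ) : ℂ) * I))) := by
    refine continuous_finsetSum _ (fun n hn => ?_)
    rw [Finset.mem_Ioc] at hn
    have : (n : ℂ) ≠ 0 := by exact_mod_cast (by omega : n ≠ 0)
    exact Continuous.const_cpow (by fun_prop) (Or.inl this)
  have hGY := GN_shift_cont Y (z := z) (by linarith) β
  have hGNc := GN_shift_cont N (z := z) (by linarith) β
  have hpt : ∀ t ∈ Set.Icc 0 T, F t * ‖GN N (z + ((β * t : ℝ) : ℂ) * I)‖ ^ 2 ≤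
      2 * (F t * ‖∑ n ∈ Finset.Ioc N Y, (n : ℂ) ^ (-(z + ((β * t : ℝ) : ℂ) * I))‖ ^ 2) +
      2 * ‖GN Y (z + ((β * t : ℝ) : ℂ) * I)‖ ^ 2 := by
    intro t _
    set s := z + ((β * t : ℝ) : ℂ) * I with hs
    have e : GN N s = ∑ n ∈ Finset.Ioc N Y, (n : ℂ) ^ (-s) + GN Y s := by
      have e0 : ∀ a : ℕ, Finset.Icc 1 a = Finset.Ioc 0 a := fun a => by ext; simp; omega
      unfold GN
      rw [e0, e0, ← Finset.sum_Ioc_consecutive (fun n : ℕ => (n : ℂ) ^ (-s)) (Nat.zero_le N) (le_max_right Y0 N)]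
      ring
    set P := ∑ n ∈ Finset.Ioc N Y, (n : ℂ) ^ (-s)
    have h3 : ‖GN N s‖ ^ 2 ≤ 2 * ‖P‖ ^ 2 + 2 * ‖GN Y s‖ ^ 2 := by
      have : ‖GN N s‖ ≤ ‖P‖ + ‖GN Y s‖ := by rw [e]; exact norm_add_le _ _
      have : ‖GN N s‖ ^ 2 ≤ (‖P‖ + ‖GN Y s‖) ^ 2 := by gcongr
      nlinarith [sq_nonneg (‖P‖ - ‖GN Y s‖)]
    calc _ ≤ F t * (2 * ‖P‖ ^ 2 + 2 * ‖GN Y s‖ ^ 2) := mul_le_mul_of_nonneg_left h3 (hF0 t)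
      _ = 2 * (F t * ‖P‖ ^ 2) + F t * (2 * ‖GN Y s‖ ^ 2) := by ring
      _ ≤ 2 * (F t * ‖P‖ ^ 2) + 1 * (2 * ‖GN Y s‖ ^ 2) := by
          gcongr; exact hF1 t
      _ = _ := by ring
  have hI1 : IntervalIntegrable (fun t : ℝ => F t * ‖∑ n ∈ Finset.Ioc N Y, (n : ℂ) ^ (-(z + ((β * t : ℝ) : ℂ) * I))‖ ^ 2) volume 0 T :=
    (hFc.mul (hPc.norm.pow 2)).intervalIntegrable _ _
  have hI2 : IntervalIntegrable (fun t : ℝ => ‖GN Y (z + ((β * t : ℝ) : ℂ) * I)‖ ^ 2) volume 0 T :=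
    (hGY.norm.pow 2).intervalIntegrable _ _
  have hmono := intervalIntegral.integral_mono_on hTn ((hFc.mul (hGNc.norm.pow 2)).intervalIntegrable _ _)
    ((hI1.const_mul 2).add (hI2.const_mul 2)) hpt
  refine hmono.trans ?_
  rw [intervalIntegral.integral_add (hI1.const_mul 2) (hI2.const_mul 2), intervalIntegral.integral_const_mul,
    intervalIntegral.integral_const_mul]
  linarith


lemma cauchy_sq {g : ℂ → ℂ} {c w : ℂ} {r : ℝ} (hr : 0 < r) (hg : DifferentiableOn ℂ g (Metric.closedBall c r))
    (hw : w ∈ Metric.ball c (r / 2)) :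
    ‖g w‖ ^ 2 ≤ ∫ θ in (0:ℝ)..(2 * Real.pi), ‖g (circleMap c r θ)‖ ^ 2 := by
  have hd : DifferentiableOn ℂ (fun z => g z ^ 2) (Metric.closedBall c r) := hg.pow 2
  have h := hd.circleIntegral_sub_inv_smul (Metric.ball_subset_ball (by linarith) hw)
  have hcm : ∀ θ, circleMap c r θ ∈ Metric.closedBall c r := fun θ => circleMap_mem_closedBall c hr.le θ
  have hgc : Continuous (fun θ : ℝ => g (circleMap c r θ)) := hg.continuousOn.comp_continuous (continuous_circleMap c r) hcm
  have hwd : dist w c < r / 2 := hw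
  have hdist : ∀ θ, r / 2 ≤ ‖circleMap c r θ - w‖ := by
    intro θ
    have h1 : ‖circleMap c r θ - c‖ = r := by simp [circleMap_sub_center, abs_of_pos hr]
    have h2 := norm_sub_le_norm_sub_add_norm_sub (circleMap c r θ) w c
    rw [dist_eq_norm] at hwd
    linarith
  have hle : ‖∮ z in C(c, r), (z - w)⁻¹ • (fun z => g z ^ 2) z‖ ≤ ∫ θ in (0:ℝ)..(2 * Real.pi), 2 * ‖g (circleMap c r θ)‖ ^ 2 := by
    unfold circleIntegral
    refine intervalIntegral.norm_integral_le_of_norm_le (by positivity) ?_ ?_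
    · refine Eventually.of_forall (fun θ _ => ?_)
      simp only [smul_eq_mul, norm_mul, norm_inv, norm_pow, deriv_circleMap]
      have h1 : ‖circleMap 0 r θ‖ = r := by simp [abs_of_pos hr]
      rw [h1, norm_I, mul_one]
      have hp : 0 < ‖circleMap c r θ - w‖ := by linarith [hdist θ]
      have h2 : r * ‖circleMap c r θ - w‖⁻¹ ≤ 2 := by
        rw [← div_eq_mul_inv, div_le_iff₀ hp]; linarith [hdist θ]
      calc _ = (r * ‖circleMap c r θ - w‖⁻¹) * ‖g (circleMap c r θ)‖ ^ 2 := by ring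
        _ ≤ _ := by gcongr
    · exact (continuous_const.mul (hgc.norm.pow 2)).intervalIntegrable _ _
  rw [h, intervalIntegral.integral_const_mul, smul_eq_mul, norm_mul, norm_pow] at hle
  have e : ‖(2 * Real.pi * I : ℂ)‖ = 2 * Real.pi := by
    simp [abs_of_pos Real.pi_pos]
  rw [e] at hle
  have hpi := Real.pi_gt_three
  nlinarith [sq_nonneg ‖g w‖]

noncomputable def Phi (N : ℕ) (β r : ℝ) (t : Finset ℂ) (τ : ℝ) : ℝ :=
  ∑ c ∈ t, ∫ θ in (0:ℝ)..(2 * Real.pi), ‖GN N (circleMap c r θ + ((β * τ : ℝ) : ℂ) * I)‖ ^ 2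

lemma joint_cont (N : ℕ) (β : ℝ) {r : ℝ} (hr : 0 < r) {c : ℂ} (hc : ∀ z ∈ Metric.closedBall c r, z.re < 1) :
    Continuous (fun p : ℝ × ℝ => ‖GN N (circleMap c r p.2 + ((β * p.1 : ℝ) : ℂ) * I)‖ ^ 2) := by
  refine (Continuous.norm ?_).pow 2
  refine (GN_cont N).comp_continuous (by fun_prop) (fun p => ?_)
  simpa using hc _ (circleMap_mem_closedBall c hr.le p.2)

lemma Phi_cont (N : ℕ) (β : ℝ) {r : ℝ} (hr : 0 < r) (t : Finset ℂ)
    (hc : ∀ c ∈ t, ∀ z ∈ Metric.closedBall c r, z.re < 1) : Continuous (Phi N β r t) := by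
  unfold Phi
  refine continuous_finsetSum _ (fun c hct => ?_)
  exact intervalIntegral.continuous_parametric_intervalIntegral_of_continuous'
    (f := fun τ θ => ‖GN N (circleMap c r θ + ((β * τ : ℝ) : ℂ) * I)‖ ^ 2) (joint_cont N β hr (hc c hct)) 0 (2 * Real.pi)

lemma Phi_nonneg (N : ℕ) (β r : ℝ) (t : Finset ℂ) (τ : ℝ) : 0 ≤ Phi N β r t τ :=
  Finset.sum_nonneg (fun c _ => intervalIntegral.integral_nonneg (by positivity) (fun θ _ => by positivity))

lemma Phi_bound (N : ℕ) (β : ℝ) {r : ℝ} (hr : 0 < r) (t : Finset ℂ)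
    (hc : ∀ c ∈ t, ∀ z ∈ Metric.closedBall c r, z.re < 1) (τ : ℝ) {s : ℂ} (hs : ∃ c ∈ t, s ∈ Metric.ball c (r / 2)) :
    ‖GN N (s + ((β * τ : ℝ) : ℂ) * I)‖ ^ 2 ≤ Phi N β r t τ := by
  obtain ⟨c, hct, hsc⟩ := hs
  have hd : DifferentiableOn ℂ (fun z => GN N (z + ((β * τ : ℝ) : ℂ) * I)) (Metric.closedBall c r) := by
    refine (GN_diff N).comp (by fun_prop) (fun z hz => ?_)
    simpa using hc c hct z hz
  refine (cauchy_sq hr hd hsc).trans ?_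
  unfold Phi
  exact Finset.single_le_sum (f := fun c => ∫ θ in (0:ℝ)..(2 * Real.pi), ‖GN N (circleMap c r θ + ((β * τ : ℝ) : ℂ) * I)‖ ^ 2)
    (fun c _ => intervalIntegral.integral_nonneg (by positivity) (fun θ _ => by positivity)) hct

lemma Phi_int (N : ℕ) (β : ℝ) {r : ℝ} (hr : 0 < r) (t : Finset ℂ)
    (hc : ∀ c ∈ t, ∀ z ∈ Metric.closedBall c r, z.re < 1) (F : ℝ → ℝ) (hF : Continuous F) (T V : ℝ)
    (hV : ∀ c ∈ t, ∀ z ∈ Metric.closedBall c r, ∫ τ in (0:ℝ)..T, F τ * ‖GN N (z + ((β * τ : ℝ) : ℂ) * I)‖ ^ 2 ≤ V) :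
    ∫ τ in (0:ℝ)..T, F τ * Phi N β r t τ ≤ t.card * (2 * Real.pi * V) := by
  have hjc : ∀ c ∈ t, Continuous (fun p : ℝ × ℝ => F p.1 * ‖GN N (circleMap c r p.2 + ((β * p.1 : ℝ) : ℂ) * I)‖ ^ 2) :=
    fun c hct => (hF.comp continuous_fst).mul (joint_cont N β hr (hc c hct))
  have e : ∀ τ, F τ * Phi N β r t τ = ∑ c ∈ t, ∫ θ in (0:ℝ)..(2 * Real.pi), F τ * ‖GN N (circleMap c r θ + ((β * τ : ℝ) : ℂ) * I)‖ ^ 2 := by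
    intro τ
    unfold Phi
    rw [Finset.mul_sum]
    simp only [intervalIntegral.integral_const_mul]
  simp only [e]
  rw [intervalIntegral.integral_finsetSum]
  · rw [← nsmul_eq_mul]
    refine Finset.sum_le_card_nsmul _ _ _ (fun c hct => ?_)
    rw [intervalIntegral_intervalIntegral_swap]
    · have := intervalIntegral.integral_mono_on (a := 0) (b := 2 * Real.pi) (by positivity)
        (f := fun θ => ∫ τ in (0:ℝ)..T, F τ * ‖GN N (circleMap c r θ + ((β * τ : ℝ) : ℂ) * I)‖ ^ 2) (g := fun _ => V)
        (μ := volume)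
        ((intervalIntegral.continuous_parametric_intervalIntegral_of_continuous'
          (f := fun θ τ => F τ * ‖GN N (circleMap c r θ + ((β * τ : ℝ) : ℂ) * I)‖ ^ 2)
            ((hjc c hct).comp continuous_swap) 0 T).intervalIntegrable _ _)
        (by simp) (fun θ _ => hV c hct _ (circleMap_mem_closedBall c hr.le θ))
      simpa using this
    · refine ((hjc c hct).continuousOn.integrableOn_compact (K := Set.uIcc 0 T ×ˢ Set.uIcc 0 (2 * Real.pi))
        (isCompact_uIcc.prod isCompact_uIcc)).mono_set ?_
      exact Set.prod_mono Set.uIoc_subset_uIcc Set.uIoc_subset_uIcc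
  · intro c hct
    exact (intervalIntegral.continuous_parametric_intervalIntegral_of_continuous'
      (f := fun τ θ => F τ * ‖GN N (circleMap c r θ + ((β * τ : ℝ) : ℂ) * I)‖ ^ 2) (hjc c hct) 0 (2 * Real.pi)).intervalIntegrable _ _

/-- Measure bound from a pointwise majorisation. -/
lemma meas_lower {A : Set ℝ} (hA : MeasurableSet A) {F H : ℝ → ℝ} (hF : Continuous F) (hH : Continuous H) {q T : ℝ} (hT : 0 ≤ T)
    (hF1 : ∀ t, F t ≤ 1) (h : ∀ t, t ∉ A → F t ≤ q + H t) (hq : 0 ≤ q) (hH0 : ∀ t, 0 ≤ H t) :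
    ∫ t in (0:ℝ)..T, F t ≤ (volume (A ∩ Set.Icc 0 T)).toReal + q * T + ∫ t in (0:ℝ)..T, H t := by
  have hI : IntervalIntegrable (A.indicator (fun _ => (1 : ℝ))) volume 0 T := by
    rw [intervalIntegrable_iff]
    exact (integrableOn_const (by simp)).indicator hA
  have hpt : ∀ t ∈ Set.Icc 0 T, F t ≤ A.indicator (fun _ => (1 : ℝ)) t + q + H t := by
    intro t _
    by_cases ht : t ∈ A
    · rw [Set.indicator_of_mem ht]; linarith [hF1 t, hH0 t]
    · rw [Set.indicator_of_notMem ht]; linarith [h t ht]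
  have hm := intervalIntegral.integral_mono_on hT (hF.intervalIntegrable _ _)
    ((hI.add (intervalIntegrable_const (c := q))).add (hH.intervalIntegrable 0 T)) hpt
  refine hm.trans ?_
  rw [intervalIntegral.integral_add (hI.add (intervalIntegrable_const (c := q))) (hH.intervalIntegrable 0 T),
    intervalIntegral.integral_add hI (intervalIntegrable_const (c := q))]
  have e : ∫ t in (0:ℝ)..T, A.indicator (fun _ => (1 : ℝ)) t ≤ (volume (A ∩ Set.Icc 0 T)).toReal := by
    rw [intervalIntegral.integral_of_le hT, integral_indicator hA, setIntegral_const, smul_eq_mul, mul_one,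
      Measure.real, Measure.restrict_apply hA]
    refine ENNReal.toReal_mono ?_ (measure_mono (Set.inter_subset_inter_right _ Set.Ioc_subset_Icc_self))
    exact ((measure_mono Set.inter_subset_right).trans_lt (by simp)).ne
  simp only [intervalIntegral.integral_const, sub_zero, smul_eq_mul]
  linarith

lemma zetaN_diff {d : ℝ} {N : ℕ} {s : ℂ} (hs : 0 < s.re) (τ δ : ℝ)
    (h : ∀ n ∈ Finset.Icc 1 N, ‖cexp (I * (((d - 1) * Real.log n : ℝ) : ℂ) * τ) - 1‖ < δ) :
    ‖∑ n ∈ Finset.Icc 1 N, (n : ℂ) ^ (-(s + ((d * τ : ℝ) : ℂ) * I)) - ∑ n ∈ Finset.Icc 1 N, (n : ℂ) ^ (-(s + ((1 * τ : ℝ) : ℂ) * I))‖ ≤ N * δ := by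
  rw [← Finset.sum_sub_distrib]
  refine (norm_sum_le _ _).trans ?_
  have : ∀ n ∈ Finset.Icc 1 N, ‖(n : ℂ) ^ (-(s + ((d * τ : ℝ) : ℂ) * I)) - (n : ℂ) ^ (-(s + ((1 * τ : ℝ) : ℂ) * I))‖ ≤ δ := by
    intro n hn
    have hn1 : 1 ≤ n := (Finset.mem_Icc.mp hn).1
    have hδ := h n hn
    have hn1' : (1 : ℝ) ≤ n := by exact_mod_cast hn1
    rw [cpow_shift hn1, cpow_shift hn1, ← mul_sub, norm_mul, norm_nat_cpow hn1]
    have e : cexp (I * ((-1 * Real.log n : ℝ) : ℂ) * τ) = cexp (I * ((-d * Real.log n : ℝ) : ℂ) * τ) * cexp (I * (((d - 1) * Real.log n : ℝ) : ℂ) * τ) := by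
      rw [← Complex.exp_add]; push_cast; ring_nf
    have e2 : ‖cexp (I * ((-d * Real.log n : ℝ) : ℂ) * τ)‖ = 1 := by
      rw [show I * ((-d * Real.log n : ℝ) : ℂ) * τ = ((-d * Real.log n * τ : ℝ) : ℂ) * I by push_cast; ring, Complex.norm_exp_ofReal_mul_I]
    have e3 : ‖cexp (I * ((-d * Real.log n : ℝ) : ℂ) * τ) - cexp (I * ((-1 * Real.log n : ℝ) : ℂ) * τ)‖ ≤ δ := by
      rw [e, ← mul_one_sub, norm_mul, e2, one_mul, norm_sub_rev]; exact hδ.le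
    have e4 : (n : ℝ) ^ (-s.re) ≤ 1 := Real.rpow_le_one_of_one_le_of_nonpos hn1' (by linarith)
    calc _ ≤ 1 * δ := by gcongr
      _ = δ := one_mul _
  refine (Finset.sum_le_card_nsmul _ _ _ this).trans (le_of_eq ?_)
  simp

lemma exists_M (N : ℕ) {q : ℝ} (hq0 : 0 ≤ q) (hq1 : q < 1) : ∃ M : ℕ, 1 ≤ M ∧ q ^ M ≤ (1 / (2 * (M : ℝ))) ^ N / 8 := by
  have h := (tendsto_pow_const_mul_const_pow_of_abs_lt_one N (r := q) (by rw [abs_of_nonneg hq0]; exact hq1)).const_mul ((2 : ℝ) ^ N)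
  rw [mul_zero] at h
  have h2 := h.eventually_lt_const (show (0 : ℝ) < 1 / 8 by norm_num)
  obtain ⟨M, hM, hM1⟩ := (h2.and (eventually_ge_atTop 1)).exists
  have hM0 : (0 : ℝ) < M := by exact_mod_cast hM1
  refine ⟨M, hM1, ?_⟩
  rw [div_pow, one_pow, div_div, le_div_iff₀ (by positivity), mul_pow]
  linarith


set_option maxHeartbeats 1600000 in
theorem core (d : ℝ) (hd : Irrational d) (K : Set ℂ) (hK : IsCompact K) (hne : K.Nonempty)
    (hKD : K ⊆ {s : ℂ | 1/2 < s.re ∧ s.re < 1}) (ε : ℝ) (hε : 0 < ε) :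
    ∃ κ : ℝ, 0 < κ ∧ ∃ T0 : ℝ, ∀ T, T0 ≤ T → κ * T ≤
      (volume ({τ : ℝ | ∀ s ∈ K, ‖riemannZeta (s + (d * τ : ℝ) * Complex.I) - riemannZeta (s + τ * Complex.I)‖ ≤ 3 * ε / 4}
        ∩ Set.Icc 0 T)).toReal := by
  -- geometry
  have hopen : IsOpen {s : ℂ | 1/2 < s.re ∧ s.re < 1} :=
    (isOpen_lt continuous_const Complex.continuous_re).inter (isOpen_lt Complex.continuous_re continuous_const)
  obtain ⟨r, hr, hrD⟩ := hK.exists_cthickening_subset_open hopen hKD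
  have hK' : IsCompact (Metric.cthickening r K) := hK.cthickening
  have hne' : (Metric.cthickening r K).Nonempty := hne.mono (Metric.self_subset_cthickening K)
  obtain ⟨z1, hz1, hmin⟩ := hK'.exists_isMinOn hne' Complex.continuous_re.continuousOn
  obtain ⟨z2, hz2, hmax⟩ := hK'.exists_isMaxOn hne' Complex.continuous_re.continuousOn
  obtain ⟨z3, hz3, hB⟩ := hK'.exists_isMaxOn hne' (Complex.continuous_im.abs).continuousOn
  obtain ⟨t0, ht0K, ht0f, ht0⟩ := hK.finite_cover_balls (show 0 < r / 2 by positivity)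
  set t := ht0f.toFinset with ht
  have htK : ∀ c ∈ t, ∀ z ∈ Metric.closedBall c r, z ∈ Metric.cthickening r K := fun c hc z hz =>
    Metric.closedBall_subset_cthickening (ht0K (ht0f.mem_toFinset.mp hc)) r hz
  have hc : ∀ c ∈ t, ∀ z ∈ Metric.closedBall c r, z.re < 1 := fun c hc z hz => (hrD (htK c hc z hz)).2
  have hcov : ∀ s ∈ K, ∃ c ∈ t, s ∈ Metric.ball c (r / 2) := by
    intro s hs
    have := ht0 hs
    simp only [Set.mem_iUnion] at this
    obtain ⟨c, hc, h⟩ := this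
    exact ⟨c, ht0f.mem_toFinset.mpr hc, h⟩
  have h1 : 1 / 2 < z1.re := (hrD hz1).1
  have h2 : z2.re < 1 := (hrD hz2).2
  have h12 : z1.re ≤ z2.re := hmin hz2
  -- arithmetic
  have hα : d - 1 ≠ 0 := by
    intro h
    exact hd ⟨1, by push_cast; linarith⟩
  have hd0 : d ≠ 0 := hd.ne_zero
  have hdm : Irrational (d - 1) := by simpa using hd.sub_intCast 1
  have hir1 : Irrational (1 / (d - 1)) := by rw [one_div]; exact hdm.inv
  have hird : Irrational (d / (d - 1)) := by
    have : d / (d - 1) = 1 / (d - 1) + (1 : ℤ) := by push_cast; field_simp; ring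
    rw [this]; exact hir1.add_intCast 1
  set J : ℝ := (t.card : ℝ) with hJ
  have hJ0 : 0 ≤ J := Nat.cast_nonneg _
  have hpi := Real.pi_pos
  set η : ℝ := (ε / 4) ^ 2 with hη
  have hη0 : 0 < η := by positivity
  set ρ : ℝ := η / (16 * Real.pi * (J + 1)) with hρ
  have hρ0 : 0 < ρ := by positivity
  obtain ⟨N1, hN1⟩ := main_ms hα one_ne_zero hir1 |z3.im| h1 h12 h2 hρ0
  obtain ⟨N2, hN2⟩ := main_ms hα hd0 hird |z3.im| h1 h12 h2 hρ0
  set N := max N1 N2 with hN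
  -- parameters
  set δ : ℝ := min 1 (ε / (4 * (N + 1))) with hδ
  have hδ0 : 0 < δ := by rw [hδ]; positivity
  have hδ1 : δ ≤ 1 := min_le_left _ _
  have hδN : N * δ ≤ ε / 4 := by
    have : δ ≤ ε / (4 * (N + 1)) := min_le_right _ _
    calc (N : ℝ) * δ ≤ (N + 1) * (ε / (4 * (N + 1))) := by gcongr; linarith
      _ = ε / 4 := by field_simp
  obtain ⟨M, hM1, hM⟩ := exists_M N (q := 1 - δ ^ 2 / 4) (by nlinarith) (by nlinarith [sq_pos_of_pos hδ0])
  have hM0 : (0 : ℝ) < M := by exact_mod_cast hM1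
  set κ : ℝ := (1 / (2 * (M : ℝ))) ^ N with hκ
  have hκ0 : 0 < κ := by positivity
  set F := wF (d - 1) M N with hF
  have hTP : TP (d - 1) κ F := wF_TP (d - 1) M N hM1
  have hF0 : ∀ x, 0 ≤ F x := wF_nonneg (d - 1) M N
  have hF1 : ∀ x, F x ≤ 1 := wF_le_one (d - 1) M N
  have hFc : Continuous F := wF_cont (d - 1) M N
  set ρ2 : ℝ := ρ * κ / 2 with hρ2
  have hρ20 : 0 < ρ2 := by positivity
  obtain ⟨T1, hT1⟩ := hN1 N (le_max_left _ _) κ F hTP hF0 hF1 hFc ρ2 hρ20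
  obtain ⟨T2, hT2⟩ := hN2 N (le_max_right _ _) κ F hTP hF0 hF1 hFc ρ2 hρ20
  obtain ⟨T3, hT3p, hT3⟩ := hTP.mean hα (κ / 3) (by positivity)
  refine ⟨κ / 4, by positivity, max (max T1 T2) T3, fun T hT => ?_⟩
  have hTT1 : T1 ≤ T := (le_max_left _ _).trans ((le_max_left _ _).trans hT)
  have hTT2 : T2 ≤ T := (le_max_right _ _).trans ((le_max_left _ _).trans hT)
  have hTT3 : T3 ≤ T := (le_max_right _ _).trans hT
  have hTp : 0 < T := by linarith
  set IF := ∫ x in (0:ℝ)..T, F x with hIF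
  have hIF3 := hT3 T hTT3
  rw [← hIF] at hIF3
  set V := ρ * IF + ρ2 * T with hV
  have hV1 := Phi_int N 1 hr t hc F hFc T V (fun c hct z hz =>
    hT1 T hTT1 z (hmin (htK c hct z hz)) (hmax (htK c hct z hz)) (hB (htK c hct z hz)))
  have hV2 := Phi_int N d hr t hc F hFc T V (fun c hct z hz =>
    hT2 T hTT2 z (hmin (htK c hct z hz)) (hmax (htK c hct z hz)) (hB (htK c hct z hz)))
  have hP1 := Phi_cont N 1 hr t hc
  have hP2 := Phi_cont N d hr t hc
  -- the good set
  set A : Set ℝ := {τ | (∀ n ∈ Finset.Icc 1 N, ‖cexp (I * (((d - 1) * Real.log n : ℝ) : ℂ) * τ) - 1‖ < δ) ∧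
    Phi N 1 r t τ < η ∧ Phi N d r t τ < η} with hA
  have hAm : MeasurableSet A := by
    have e : A = (⋂ n ∈ Finset.Icc 1 N, {τ : ℝ | ‖cexp (I * (((d - 1) * Real.log n : ℝ) : ℂ) * τ) - 1‖ < δ}) ∩
        ({τ | Phi N 1 r t τ < η} ∩ {τ | Phi N d r t τ < η}) := by
      ext τ; simp [hA]
    rw [e]
    refine MeasurableSet.inter ?_ (MeasurableSet.inter ?_ ?_)
    · refine Finset.measurableSet_biInter _ (fun n _ => ?_)
      exact (isOpen_lt (by fun_prop) continuous_const).measurableSet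
    · exact (isOpen_lt hP1 continuous_const).measurableSet
    · exact (isOpen_lt hP2 continuous_const).measurableSet
  have hAsub : A ⊆ {τ : ℝ | ∀ s ∈ K, ‖riemannZeta (s + (d * τ : ℝ) * Complex.I) - riemannZeta (s + τ * Complex.I)‖ ≤ 3 * ε / 4} := by
    intro τ hτ s hs
    obtain ⟨ha, hb, hc'⟩ := hτ
    have b1 := (Phi_bound N 1 hr t hc τ (hcov s hs)).trans_lt hb
    have b2 := (Phi_bound N d hr t hc τ (hcov s hs)).trans_lt hc'
    have b1' := lt_of_pow_lt_pow_left₀ 2 (by positivity) b1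
    have b2' := lt_of_pow_lt_pow_left₀ 2 (by positivity) b2
    have b3 := zetaN_diff (s := s) (by linarith [(hKD hs).1]) τ δ ha
    have e : riemannZeta (s + (d * τ : ℝ) * Complex.I) - riemannZeta (s + τ * Complex.I) =
        GN N (s + ((d * τ : ℝ) : ℂ) * I) - GN N (s + ((1 * τ : ℝ) : ℂ) * I) +
        (∑ n ∈ Finset.Icc 1 N, (n : ℂ) ^ (-(s + ((d * τ : ℝ) : ℂ) * I)) - ∑ n ∈ Finset.Icc 1 N, (n : ℂ) ^ (-(s + ((1 * τ : ℝ) : ℂ) * I))) := by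
      unfold GN
      rw [one_mul]
      ring
    rw [e]
    refine (norm_add_le _ _).trans ?_
    have := norm_sub_le (GN N (s + ((d * τ : ℝ) : ℂ) * I)) (GN N (s + ((1 * τ : ℝ) : ℂ) * I))
    linarith
  have hml := meas_lower hAm hFc (H := fun x => (F x * Phi N 1 r t x + F x * Phi N d r t x) / η)
    (((hFc.mul hP1).add (hFc.mul hP2)).div_const η) (q := κ / 8) hTp.le hF1 (by
      intro τ hτ
      have n1 := mul_nonneg (hF0 τ) (Phi_nonneg N 1 r t τ)
      have n2 := mul_nonneg (hF0 τ) (Phi_nonneg N d r t τ)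
      have hnn : 0 ≤ (F τ * Phi N 1 r t τ + F τ * Phi N d r t τ) / η := by positivity
      by_cases ha : ∀ n ∈ Finset.Icc 1 N, ‖cexp (I * (((d - 1) * Real.log n : ℝ) : ℂ) * τ) - 1‖ < δ
      · have hor : η ≤ Phi N 1 r t τ + Phi N d r t τ := by
          by_contra hcon
          push Not at hcon
          have m1 := Phi_nonneg N 1 r t τ
          have m2 := Phi_nonneg N d r t τ
          exact hτ ⟨ha, by linarith, by linarith⟩
        have : F τ ≤ (F τ * Phi N 1 r t τ + F τ * Phi N d r t τ) / η := by
          rw [le_div_iff₀ hη0, ← mul_add]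
          exact mul_le_mul_of_nonneg_left hor (hF0 τ)
        linarith
      · push Not at ha
        obtain ⟨n, hn, hn2⟩ := ha
        have := wF_small (d - 1) M N n hn τ δ hδ0.le hn2
        linarith) (by positivity) (by
      intro τ
      have n1 := mul_nonneg (hF0 τ) (Phi_nonneg N 1 r t τ)
      have n2 := mul_nonneg (hF0 τ) (Phi_nonneg N d r t τ)
      positivity)
  have hadd : ∫ x in (0:ℝ)..T, (F x * Phi N 1 r t x + F x * Phi N d r t x) =
      (∫ x in (0:ℝ)..T, F x * Phi N 1 r t x) + ∫ x in (0:ℝ)..T, F x * Phi N d r t x :=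
    intervalIntegral.integral_add ((hFc.mul hP1).intervalIntegrable _ _)
      ((hFc.mul hP2).intervalIntegrable _ _)
  rw [intervalIntegral.integral_div, hadd] at hml
  have hIF0 : 0 ≤ IF := intervalIntegral.integral_nonneg hTp.le (fun x _ => hF0 x)
  have hHle : ((∫ x in (0:ℝ)..T, F x * Phi N 1 r t x) + ∫ x in (0:ℝ)..T, F x * Phi N d r t x) / η ≤ IF / 4 + κ / 8 * T := by
    rw [div_le_iff₀ hη0]
    have e1 : (J + 1) * (4 * Real.pi * V) = (IF / 4 + κ / 8 * T) * η := by
      rw [hV, hρ2, hρ]; field_simp; ring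
    have hV0 : 0 ≤ V := by positivity
    have : J * (2 * Real.pi * V) + J * (2 * Real.pi * V) ≤ (J + 1) * (4 * Real.pi * V) := by nlinarith [mul_pos hpi hpi, mul_nonneg hpi.le hV0]
    linarith
  have hvol : (volume (A ∩ Set.Icc 0 T)).toReal ≤ (volume ({τ : ℝ | ∀ s ∈ K, ‖riemannZeta (s + (d * τ : ℝ) * Complex.I) - riemannZeta (s + τ * Complex.I)‖ ≤ 3 * ε / 4}
        ∩ Set.Icc 0 T)).toReal := by
    refine ENNReal.toReal_mono ?_ (measure_mono (Set.inter_subset_inter_left _ hAsub))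
    exact ((measure_mono Set.inter_subset_right).trans_lt (by simp)).ne
  rw [← hIF] at hml
  nlinarith


theorem self_approx_zeta_irrational (d : ℝ) (hd : Irrational d)
    (K : Set ℂ) (hK : IsCompact K) (hKD : K ⊆ strip) (hKc : IsConnected Kᶜ)
    (ε : ℝ) (hε : 0 < ε) :
    0 < lowerDens {τ : ℝ |
      supNorm K (fun s => riemannZeta (s + (d * τ : ℝ) * Complex.I)
        - riemannZeta (s + τ * Complex.I)) < ENNReal.ofReal ε} := by
  have h34 : (3/4 : ℂ).re = 3/4 := by
    have : (3/4 : ℂ) = ((3/4 : ℝ) : ℂ) := by push_cast; ring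
    rw [this, Complex.ofReal_re]
  obtain ⟨κ, hκ, T0, hT0⟩ := core d hd (insert (3/4 : ℂ) K) (hK.insert _) (Set.insert_nonempty _ _)
    (by
      intro s hs
      rcases hs with rfl | hs
      · constructor <;> rw [h34] <;> norm_num
      · exact hKD hs) ε hε
  set S := {τ : ℝ | supNorm K (fun s => riemannZeta (s + (d * τ : ℝ) * Complex.I) - riemannZeta (s + τ * Complex.I)) < ENNReal.ofReal ε} with hS
  have hfin : ∀ (A : Set ℝ) (T : ℝ), volume (A ∩ Set.Icc 0 T) ≠ ⊤ := fun A T =>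
    ((measure_mono Set.inter_subset_right).trans_lt (by simp)).ne
  have hsub : {τ : ℝ | ∀ s ∈ insert (3/4 : ℂ) K, ‖riemannZeta (s + (d * τ : ℝ) * Complex.I) - riemannZeta (s + τ * Complex.I)‖ ≤ 3 * ε / 4} ⊆ S := by
    intro τ hτ
    have h1 : supNorm K (fun s => riemannZeta (s + (d * τ : ℝ) * Complex.I) - riemannZeta (s + τ * Complex.I)) ≤ ENNReal.ofReal (3 * ε / 4) := by
      refine iSup₂_le (fun s hs => ?_)
      have := hτ s (Set.mem_insert_of_mem _ hs)
      rw [← enorm_eq_nnnorm, ← ofReal_norm]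
      exact ENNReal.ofReal_le_ofReal this
    exact h1.trans_lt ((ENNReal.ofReal_lt_ofReal_iff hε).mpr (by linarith))
  have hub : ∀ᶠ T : ℝ in atTop, (volume (S ∩ Set.Icc 0 T)).toReal / T ≤ 1 := by
    filter_upwards [eventually_gt_atTop (0:ℝ)] with T hT
    rw [div_le_one hT]
    refine (ENNReal.toReal_mono (by simp) (measure_mono Set.inter_subset_right)).trans ?_
    rw [Real.volume_Icc, sub_zero, ENNReal.toReal_ofReal hT.le]
  refine hκ.trans_le ?_
  unfold lowerDens
  refine le_liminf_of_le ?_ ?_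
  · exact IsBoundedUnder.isCoboundedUnder_ge ⟨1, by simpa using hub⟩
  · filter_upwards [eventually_gt_atTop (0:ℝ), eventually_ge_atTop T0] with T hT hT'
    rw [le_div_iff₀ hT]
    exact (hT0 T hT').trans (ENNReal.toReal_mono (hfin _ _) (measure_mono (Set.inter_subset_inter_left _ hsub)))
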